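/- arXiv:1305.1347 — 9 statements merged into one kernel-verified Lean document; each statement's English description precedes it below -/
import Mathlib

section
/- Under the propagation rounding, for every tree node a ∈ X and every set S ⊆ V_a, the random output set A satisfies Pr[A ∩ S = T] = x(S,T) for every T ⊆ S. -/
attribute [local instance] Classical.propDecidable

open Finset

namespace Stmt2

/-- `Anc parent a b` says that `a` is an ancestor of `b` (or `b` itself) in the rooted
tree determined by the `parent` function. -/
def Anc {X : Type*} (parent : X → X) (a b : X) : Prop :=
  Relation.ReflTransGen (fun p c => parent c = p) a b

/-- The probability that the propagation rounding produces a given joint outcome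
`f : X → Finset V` (assigning to every tree node `a` the sampled set `A_a ⊆ V_a`):
the product over the tree nodes of the transition probabilities
`x(V_r, A_r)` at the root and `x(V_a, A_a)/x(V_b, A_b)` at a node `a` with parent `b`. -/
noncomputable def outcomeProb {V X : Type*} [Fintype X]
    (parent : X → X) (root : X) (Vp : X → Finset V)
    (x : Finset V → Finset V → ℝ) (f : X → Finset V) : ℝ :=
  ∏ b : X, (if b = root then x (Vp root) (f root)
            else x (Vp b) (f b) / x (Vp (parent b)) (f (parent b)))

/-- An outcome `f` is consistent with the propagation rounding process:  each sampled
set satisfies `A_a ⊆ V_a`, and agrees with its parent's sample on `V_b`. -/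
def Consistent {V X : Type*} [DecidableEq V]
    (parent : X → X) (root : X) (Vp : X → Finset V) (f : X → Finset V) : Prop :=
  (∀ b, f b ⊆ Vp b) ∧ (∀ b, b ≠ root → f b ∩ Vp (parent b) = f (parent b))

section Helpers

variable {V X : Type*} [Fintype V] [DecidableEq V] [Fintype X] [DecidableEq X]

/-- Marginals over a larger set. -/
lemma marg (P : Finset V → Prop) (hP : ∀ A B, A ⊆ B → P B → P A)
    (x : Finset V → Finset V → ℝ)
    (hxc : ∀ (S T : Finset V) (u : V), P (insert u S) → T ⊆ S → u ∉ S →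
        x S T = x (insert u S) T + x (insert u S) (insert u T))
    (S T : Finset V) (hT : T ⊆ S) (R : Finset V) (hd : Disjoint S R) (hR : P (S ∪ R)) :
    x S T = ∑ Q ∈ R.powerset, x (S ∪ R) (T ∪ Q) := by
  induction R using Finset.induction_on with
  | empty => simp
  | insert u R hu ih =>
    have hd' : Disjoint S R := hd.mono_right (Finset.subset_insert u R)
    have huS : u ∉ S := fun h => (Finset.disjoint_left.mp hd h) (Finset.mem_insert_self u R)
    rw [ih hd' (hP _ _ (Finset.union_subset_union_right (Finset.subset_insert u R)) hR),
      Finset.sum_powerset_insert hu, ← Finset.sum_add_distrib]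
    refine Finset.sum_congr rfl fun Q hQ => ?_
    rw [Finset.mem_powerset] at hQ
    rw [Finset.union_insert] at hR ⊢
    rw [Finset.union_insert]
    exact hxc _ _ u hR (Finset.union_subset_union hT hQ) (by simp [huS, hu])

lemma marg' (P : Finset V → Prop) (hP : ∀ A B, A ⊆ B → P B → P A)
    (x : Finset V → Finset V → ℝ)
    (hxc : ∀ (S T : Finset V) (u : V), P (insert u S) → T ⊆ S → u ∉ S →
        x S T = x (insert u S) T + x (insert u S) (insert u T))
    (S T S' : Finset V) (hT : T ⊆ S) (hS : S ⊆ S') (hR : P S') :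
    ∑ C : Finset V, (if C ⊆ S' ∧ C ∩ S = T then x S' C else 0) = x S T := by
  have hu : S ∪ (S' \ S) = S' := Finset.union_sdiff_of_subset hS
  rw [marg P hP x hxc S T hT (S' \ S) Finset.disjoint_sdiff (by rwa [hu]), hu,
    ← Finset.sum_filter]
  refine Finset.sum_bij' (fun C _ => C \ S) (fun Q _ => T ∪ Q) ?_ ?_ ?_ ?_ ?_
  · intro C hC
    simp only [Finset.mem_filter, Finset.mem_univ, true_and] at hC
    rw [Finset.mem_powerset]
    exact Finset.sdiff_subset_sdiff hC.1 le_rfl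
  · intro Q hQ
    rw [Finset.mem_powerset] at hQ
    simp only [Finset.mem_filter, Finset.mem_univ, true_and]
    refine ⟨Finset.union_subset (hT.trans hS) (hQ.trans Finset.sdiff_subset), ?_⟩
    ext v
    have h1 := @hQ v
    have h2 := @hT v
    simp only [Finset.mem_sdiff, Finset.mem_inter, Finset.mem_union] at *
    tauto
  · intro C hC
    simp only [Finset.mem_filter, Finset.mem_univ, true_and] at hC
    rw [← hC.2]
    ext v
    simp only [Finset.mem_sdiff, Finset.mem_inter, Finset.mem_union]
    tauto
  · intro Q hQ
    rw [Finset.mem_powerset] at hQ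
    ext v
    have h1 := @hQ v
    have h2 := @hT v
    simp only [Finset.mem_sdiff, Finset.mem_union] at *
    tauto
  · intro C hC
    simp only [Finset.mem_filter, Finset.mem_univ, true_and] at hC
    congr 1
    rw [← hC.2]
    ext v
    simp only [Finset.mem_sdiff, Finset.mem_inter, Finset.mem_union]
    tauto

/-- Assignments supported on `D`. -/
noncomputable def Fn (D : Finset X) : Finset (X → Finset V) :=
  Finset.univ.filter (fun f => ∀ c, c ∉ D → f c = ∅)

lemma sum_Fn (D : Finset X) (b : X) (hb : b ∈ D) (g : (X → Finset V) → ℝ) :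
    ∑ f ∈ Fn D, g f = ∑ f ∈ Fn (D.erase b), ∑ C : Finset V, g (Function.update f b C) := by
  rw [← Finset.sum_product']
  refine Finset.sum_bij' (fun f _ => (Function.update f b ∅, f b))
    (fun p _ => Function.update p.1 b p.2) ?_ ?_ ?_ ?_ ?_
  · intro f hf
    simp only [Fn, Finset.mem_filter, Finset.mem_univ, true_and, Finset.mem_product,
      and_true] at hf ⊢
    intro c hc
    by_cases h : c = b
    · subst h; simp
    · rw [Function.update_of_ne h]
      exact hf c (fun h' => hc (Finset.mem_erase.mpr ⟨h, h'⟩))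
  · intro p hp
    simp only [Fn, Finset.mem_filter, Finset.mem_univ, true_and, Finset.mem_product,
      and_true] at hp ⊢
    intro c hc
    have h : c ≠ b := fun h => hc (h ▸ hb)
    rw [Function.update_of_ne h]
    exact hp c (fun h' => hc (Finset.mem_of_mem_erase h'))
  · intro f hf
    simp
  · intro p hp
    simp only [Fn, Finset.mem_filter, Finset.mem_univ, true_and, Finset.mem_product,
      and_true] at hp
    have : p.1 b = ∅ := hp b (by simp)
    ext1
    · simp [← this]
    · simp
  · intro f hf
    simp

/-- Transition weight. -/
noncomputable def tr (parent : X → X) (root : X) (Vp : X → Finset V)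
    (x : Finset V → Finset V → ℝ) (b : X) (P C : Finset V) : ℝ :=
  if b = root then (if C ⊆ Vp root then x (Vp root) C else 0)
  else if C ⊆ Vp b ∧ C ∩ Vp (parent b) = P then x (Vp b) C / x (Vp (parent b)) P else 0

lemma tr_zero (parent : X → X) (root : X) (Vp : X → Finset V)
    (x : Finset V → Finset V → ℝ) (b : X) (P C : Finset V)
    (h : C ⊆ Vp b → x (Vp b) C = 0) : tr parent root Vp x b P C = 0 := by
  unfold tr
  split_ifs with h1 h2 h3
  · subst h1; exact h h2
  · rfl
  · rw [h h3.1, zero_div]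
  · rfl

lemma main_marg
    (parent : X → X) (root : X) (depth : X → ℕ)
    (hroot : parent root = root) (hdroot : depth root = 0)
    (hdepth : ∀ a, a ≠ root → depth a = depth (parent a) + 1)
    (Vp : X → Finset V) (hmono : ∀ a, Vp (parent a) ⊆ Vp a)
    (x : Finset V → Finset V → ℝ)
    (hx0 : ∀ a, ∀ C ⊆ Vp a, 0 ≤ x (Vp a) C)
    (hm : ∀ a S T, T ⊆ S → S ⊆ Vp a →
      ∑ C : Finset V, (if C ⊆ Vp a ∧ C ∩ S = T then x (Vp a) C else 0) = x S T)
    (n : ℕ) : ∀ (D : Finset X), D.card = n → (∀ c ∈ D, parent c ∈ D) → ∀ a ∈ D, ∀ B : Finset V,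
      ∑ f ∈ Fn D, (∏ c ∈ D, tr parent root Vp x c (f (parent c)) (f c)) *
        (if f a = B then 1 else 0) = if B ⊆ Vp a then x (Vp a) B else 0 := by
  induction n with
  | zero =>
    intro D hD _ a ha
    rw [Finset.card_eq_zero] at hD
    simp [hD] at ha
  | succ n ih =>
    intro D hD hcl a ha B
    obtain ⟨b, hb, hmax⟩ := Finset.exists_max_image D depth ⟨a, ha⟩
    rw [sum_Fn D b hb]
    have hcard : (D.erase b).card = n := by rw [Finset.card_erase_of_mem hb, hD]; rfl
    by_cases hbr : b = root
    · have hD1 : D = {root} := by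
        ext c
        rw [Finset.mem_singleton]
        constructor
        · intro hc
          by_contra hne
          have h1 := hmax c hc
          have h2 := hdepth c hne
          rw [hbr, hdroot] at h1
          omega
        · rintro rfl; rwa [← hbr]
      have har : a = root := by simpa [hD1] using ha
      subst hbr
      subst har
      have hF : Fn (V := V) (D.erase a) = {fun _ => ∅} := by
        ext f
        simp [Fn, hD1, funext_iff]
      rw [hF, Finset.sum_singleton, hD1]
      simp [tr]
    have hpb : ∀ c ∈ D, parent c ≠ b := by
      intro c hc h
      by_cases hcr : c = root
      · rw [hcr, hroot] at h; exact hbr h.symm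
      · have h1 := hmax c hc
        have h2 := hdepth c hcr
        rw [h] at h2
        omega
    have hcl' : ∀ c ∈ D.erase b, parent c ∈ D.erase b := by
      intro c hc
      have hc' := Finset.mem_of_mem_erase hc
      exact Finset.mem_erase.mpr ⟨hpb c hc', hcl c hc'⟩
    have hpD : parent b ∈ D.erase b := Finset.mem_erase.mpr ⟨hpb b hb, hcl b hb⟩
    have hprod : ∀ (f : X → Finset V) (C : Finset V),
        ∏ c ∈ D, tr parent root Vp x c (Function.update f b C (parent c))
          (Function.update f b C c) =
        tr parent root Vp x b (f (parent b)) C *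
          ∏ c ∈ D.erase b, tr parent root Vp x c (f (parent c)) (f c) := by
      intro f C
      rw [← Finset.mul_prod_erase D _ hb, Function.update_self,
        Function.update_of_ne (hpb b hb)]
      congr 1
      refine Finset.prod_congr rfl fun c hc => ?_
      rw [Function.update_of_ne (Finset.ne_of_mem_erase hc),
        Function.update_of_ne (hpb c (Finset.mem_of_mem_erase hc))]
    simp_rw [hprod]
    by_cases hab : a = b
    · subst hab
      simp only [Function.update_self]
      simp only [mul_ite, mul_one, mul_zero, Finset.sum_ite_eq', Finset.mem_univ, if_true]
      by_cases hB : B ⊆ Vp a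
      · have key := ih (D.erase a) hcard hcl' (parent a) hpD (B ∩ Vp (parent a))
        rw [if_pos Finset.inter_subset_right] at key
        rw [if_pos hB]
        have h1 : ∀ f : X → Finset V, tr parent root Vp x a (f (parent a)) B *
            ∏ c ∈ D.erase a, tr parent root Vp x c (f (parent c)) (f c) =
            (x (Vp a) B / x (Vp (parent a)) (B ∩ Vp (parent a))) *
            ((∏ c ∈ D.erase a, tr parent root Vp x c (f (parent c)) (f c)) *
              (if f (parent a) = B ∩ Vp (parent a) then 1 else 0)) := by
          intro f
          unfold tr
          rw [if_neg hbr]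
          by_cases h : f (parent a) = B ∩ Vp (parent a)
          · rw [if_pos ⟨hB, h.symm⟩, if_pos h, h]; ring
          · rw [if_neg (fun h' => h h'.2.symm), if_neg h]; ring
        simp_rw [h1]
        rw [← Finset.mul_sum, key]
        by_cases h0 : x (Vp (parent a)) (B ∩ Vp (parent a)) = 0
        · rw [h0, mul_zero]
          have h2 := hm a (Vp (parent a)) (B ∩ Vp (parent a)) Finset.inter_subset_right (hmono a)
          rw [h0, Finset.sum_eq_zero_iff_of_nonneg] at h2
          · have h3 := h2 B (Finset.mem_univ _)
            rw [if_pos ⟨hB, rfl⟩] at h3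
            exact h3.symm
          · intro C _
            split_ifs with h
            · exact hx0 a C h.1
            · exact le_rfl
        · rw [div_mul_cancel₀ _ h0]
      · rw [if_neg hB]
        refine Finset.sum_eq_zero fun f _ => ?_
        rw [tr_zero _ _ _ _ _ _ _ (fun h => absurd h hB), zero_mul]
    · have haD : a ∈ D.erase b := Finset.mem_erase.mpr ⟨hab, ha⟩
      rw [← ih (D.erase b) hcard hcl' a haD B]
      refine Finset.sum_congr rfl fun f _ => ?_
      simp only [Function.update_of_ne hab]
      rw [← Finset.sum_mul, ← Finset.sum_mul]
      congr 1
      by_cases h0 : f (parent b) ⊆ Vp (parent b) → x (Vp (parent b)) (f (parent b)) = 0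
      · rw [Finset.prod_eq_zero hpD (tr_zero _ _ _ _ _ _ _ h0), mul_zero]
      · push Not at h0
        have h2 := hm b (Vp (parent b)) (f (parent b)) h0.1 (hmono b)
        have h3 : ∑ C : Finset V, tr parent root Vp x b (f (parent b)) C = 1 := by
          rw [← div_self h0.2]
          nth_rewrite 1 [← h2]
          rw [Finset.sum_div]
          refine Finset.sum_congr rfl fun C _ => ?_
          unfold tr
          rw [if_neg hbr]
          split_ifs <;> simp
        rw [h3, one_mul]

end Helpers

/-- Under the propagation rounding, for every tree node `a ∈ X` and
every set `S ⊆ V_a`, the random output set `A = ⋃_a A_a` satisfies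
`Pr[A ∩ S = T] = x(S,T)` for every `T ⊆ S`.

Setting:  `G = (V, E_G)` has a rooted tree decomposition with nodes `X`, root `root`,
parent function `parent` (with a depth function witnessing well-foundedness), and bags
`U a`; the bags containing any fixed vertex of `V` form a nonempty subtree, and every
edge of `G` lies inside some bag.  `Vp a` is the union of the bags on the tree path
from the root to `a`.  The nonnegative reals `x(S,T)`, given for all
`S ⊆ V_a ∪ V_b` and `T ⊆ S`, sum to one over `T ⊆ S` and satisfy the Sherali-Adams
consistency constraints whenever all the variables involved are defined. -/
theorem stmt_2 {V X : Type*} [Fintype V] [DecidableEq V] [Fintype X] [DecidableEq X]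
    (G : SimpleGraph V)
    (parent : X → X) (root : X) (depth : X → ℕ)
    (hroot : parent root = root) (hdroot : depth root = 0)
    (hdepth : ∀ a, a ≠ root → depth a = depth (parent a) + 1)
    (U : X → Finset V)
    (hedge : ∀ u v, G.Adj u v → ∃ a, u ∈ U a ∧ v ∈ U a)
    (hsubtree : ∀ v : V, ∃ top : X, v ∈ U top ∧ ∀ a, v ∈ U a →
        Anc parent top a ∧ ∀ c, Anc parent top c → Anc parent c a → v ∈ U c)
    (Vp : X → Finset V)
    (hVroot : Vp root = U root)
    (hVp : ∀ a, a ≠ root → Vp a = U a ∪ Vp (parent a))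
    (x : Finset V → Finset V → ℝ)
    (hx0 : ∀ S T : Finset V, (∃ a b, S ⊆ Vp a ∪ Vp b) → T ⊆ S → 0 ≤ x S T)
    (hx1 : ∀ S : Finset V, (∃ a b, S ⊆ Vp a ∪ Vp b) → ∑ T ∈ S.powerset, x S T = 1)
    (hxc : ∀ (S T : Finset V) (u : V), (∃ a b, insert u S ⊆ Vp a ∪ Vp b) →
        T ⊆ S → u ∉ S →
        x S T = x (insert u S) T + x (insert u S) (insert u T)) :
    ∀ (a : X) (S : Finset V), S ⊆ Vp a → ∀ T ⊆ S,
      (∑ f ∈ (Finset.univ : Finset (X → Finset V)).filter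
          (fun f => Consistent parent root Vp f ∧ (Finset.univ.biUnion f) ∩ S = T),
        outcomeProb parent root Vp x f) = x S T := by
  have hmono : ∀ a, Vp (parent a) ⊆ Vp a := by
    intro a
    by_cases h : a = root
    · rw [h, hroot]
    · rw [hVp a h]; exact Finset.subset_union_right
  have hm : ∀ a S T, T ⊆ S → S ⊆ Vp a →
      ∑ C : Finset V, (if C ⊆ Vp a ∧ C ∩ S = T then x (Vp a) C else 0) = x S T := by
    intro a S T hT hS
    exact marg' (fun S => ∃ a b, S ⊆ Vp a ∪ Vp b)
      (fun A B h ⟨a, b, h'⟩ => ⟨a, b, h.trans h'⟩) x hxc S T (Vp a) hT hS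
      ⟨a, a, Finset.subset_union_left⟩
  have hmain := main_marg parent root depth hroot hdroot hdepth Vp hmono x
    (fun a C hC => hx0 _ _ ⟨a, a, Finset.subset_union_left⟩ hC) hm _ Finset.univ rfl
    (fun _ _ => Finset.mem_univ _)
  have hFn : Fn (V := V) (Finset.univ : Finset X) = Finset.univ := by
    ext f; simp [Fn]
  rw [hFn] at hmain
  -- membership in `Vp` along ancestors
  have hVpAnc : ∀ c a, Anc parent c a → Vp c ⊆ Vp a := by
    intro c a h
    induction h with
    | refl => exact subset_rfl
    | tail _ h2 ih => exact ih.trans (h2 ▸ hmono _)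
  have hUVp : ∀ a, U a ⊆ Vp a := by
    intro a
    by_cases h : a = root
    · rw [h, hVroot]
    · rw [hVp a h]; exact Finset.subset_union_left
  have htop : ∀ v, ∃ top, v ∈ Vp top ∧ ∀ a, v ∈ Vp a → Anc parent top a := by
    intro v
    obtain ⟨top, h1, h2⟩ := hsubtree v
    refine ⟨top, hUVp top h1, ?_⟩
    have : ∀ n a, depth a = n → v ∈ Vp a → Anc parent top a := by
      intro n
      induction n with
      | zero =>
        intro a ha hv
        have har : a = root := by
          by_contra h
          have := hdepth a h
          omega
        rw [har, hVroot] at hv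
        rw [har]
        exact (h2 _ hv).1
      | succ n ih =>
        intro a ha hv
        have har : a ≠ root := by
          rintro rfl
          omega
        have hd := hdepth a har
        rw [hVp a har, Finset.mem_union] at hv
        rcases hv with hv | hv
        · exact (h2 _ hv).1
        · exact Relation.ReflTransGen.tail (ih (parent a) (by omega) hv) rfl
    exact fun a => this _ a rfl
  have hpath : ∀ f, Consistent parent root Vp f → ∀ c a, Anc parent c a → ∀ v ∈ Vp c,
      (v ∈ f a ↔ v ∈ f c) := by
    intro f hf c a h v hv
    induction h with
    | refl => rfl
    | @tail p q h1 h2 ih =>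
      rw [← ih]
      by_cases hq : q = root
      · rw [← h2, hq, hroot]
      · have h3 := hf.2 q hq
        rw [h2] at h3
        rw [← h3, Finset.mem_inter]
        exact ⟨fun h => ⟨h, hVpAnc _ _ h1 hv⟩, fun h => h.1⟩
  intro a S hS T hT
  have hA : ∀ f, Consistent parent root Vp f → (Finset.univ.biUnion f) ∩ S = f a ∩ S := by
    intro f hf
    ext v
    simp only [Finset.mem_inter, Finset.mem_biUnion, Finset.mem_univ, true_and]
    refine and_congr_left fun hvS => ⟨?_, fun h => ⟨a, h⟩⟩
    rintro ⟨b, hb⟩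
    obtain ⟨top, h1, h2⟩ := htop v
    rw [hpath f hf top a (h2 a (hS hvS)) v h1]
    rwa [← hpath f hf top b (h2 b (hf.1 b hb)) v h1]
  have hterm : ∀ f : X → Finset V,
      (if Consistent parent root Vp f ∧ (Finset.univ.biUnion f) ∩ S = T then
        outcomeProb parent root Vp x f else 0) =
      ∑ B : Finset V, (if B ∩ S = T then
        (∏ c, tr parent root Vp x c (f (parent c)) (f c)) * (if f a = B then 1 else 0)
        else 0) := by
    intro f
    have hsum : ∑ B : Finset V, (if B ∩ S = T then
        (∏ c, tr parent root Vp x c (f (parent c)) (f c)) * (if f a = B then 1 else 0)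
        else 0) = if f a ∩ S = T then
          ∏ c, tr parent root Vp x c (f (parent c)) (f c) else 0 := by
      rw [Finset.sum_eq_single (f a)]
      · simp
      · intro B _ hB
        simp [hB.symm]
      · simp
    rw [hsum]
    by_cases hf : Consistent parent root Vp f
    · rw [hA f hf]
      simp only [hf, true_and]
      congr 1
      unfold outcomeProb
      refine Finset.prod_congr rfl fun c _ => ?_
      unfold tr
      by_cases hc : c = root
      · subst hc
        simp [hf.1 c]
      · simp [hc, hf.1 c, hf.2 c hc]
    · rw [if_neg (fun h => hf h.1)]
      have h0 : ∏ c, tr parent root Vp x c (f (parent c)) (f c) = 0 := by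
        have : ∃ b, ¬ (f b ⊆ Vp b) ∨ (b ≠ root ∧ f b ∩ Vp (parent b) ≠ f (parent b)) := by
          by_contra hne
          push Not at hne
          exact hf ⟨fun b => (hne b).1, fun b hb => (hne b).2 hb⟩
        obtain ⟨b, hb⟩ := this
        refine Finset.prod_eq_zero (Finset.mem_univ b) ?_
        rcases hb with hb | ⟨hb, hb'⟩
        · exact tr_zero _ _ _ _ _ _ _ (fun h => absurd h hb)
        · unfold tr
          rw [if_neg hb, if_neg (fun h => hb' h.2)]
      rw [h0]; simp
  rw [Finset.sum_filter, ← hm a S T hT hS]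
  trans ∑ f : X → Finset V, ∑ B : Finset V, (if B ∩ S = T then
        (∏ c, tr parent root Vp x c (f (parent c)) (f c)) * (if f a = B then 1 else 0)
        else 0)
  · exact Finset.sum_congr rfl fun f _ => by rw [← hterm f]
  rw [Finset.sum_comm]
  refine Finset.sum_congr rfl fun B _ => ?_
  have h := hmain a (Finset.mem_univ _) B
  by_cases hB : B ∩ S = T
  · simp only [hB, if_true, and_true]
    exact h
  · simp [hB]


end Stmt2
end

section
/- The instance G₁ satisfies: (i) if H has a cut of size c·m, then G₁ has an s–t-separating cut of capacity exactly 1 that separates at least c units of demand; (ii) every s–t-separating cut of G₁ has capacity at least 1; (iii) if the maximum cut of H has size s·m with s > 0, then every s–t-separating cut of G₁ has sparsity at least 1/s; (iv) every cut of G₁ that does not separate s from t and cuts positive demand has sparsity at least 1. -/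
attribute [local instance] Classical.propDecidable

open Finset

namespace Stmt6

/-- The vertex set of the instance `G₁`: `[n]` together with `s = inr false` and
`t = inr true`. -/
abbrev W (n : ℕ) := Fin n ⊕ Bool

variable {n : ℕ}

noncomputable section

/-- Number of supply edges of the MaxCut instance `H`. -/
def m (H : SimpleGraph (Fin n)) [DecidableRel H.Adj] : ℕ := H.edgeFinset.card

/-- Capacities of `G₁`: each supply edge `{s,i}` and `{t,i}` has capacity
`deg_H(i) / (2m)`. -/
def cap (H : SimpleGraph (Fin n)) [DecidableRel H.Adj] : W n → W n → ℝ :=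
  fun u v =>
    match u, v with
    | Sum.inl i, Sum.inr _ => (H.degree i : ℝ) / (2 * m H)
    | Sum.inr _, Sum.inl i => (H.degree i : ℝ) / (2 * m H)
    | _, _ => 0

/-- Demands of `G₁`: demand `1/m` between `i` and `j` for every edge `{i,j}` of `H`
(and no other demands; in particular no `s`–`t` demand). -/
def dem (H : SimpleGraph (Fin n)) [DecidableRel H.Adj] : W n → W n → ℝ :=
  fun u v =>
    match u, v with
    | Sum.inl i, Sum.inl j => if H.Adj i j then 1 / (m H : ℝ) else 0
    | _, _ => 0

/-- Capacity of the cut `(S, V∖S)` (each crossing pair is counted once). -/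
def cutCap (H : SimpleGraph (Fin n)) [DecidableRel H.Adj] (S : Finset (W n)) : ℝ :=
  ∑ u ∈ S, ∑ v ∈ Sᶜ, cap H u v

/-- Demand separated by the cut `(S, V∖S)`. -/
def cutDem (H : SimpleGraph (Fin n)) [DecidableRel H.Adj] (S : Finset (W n)) : ℝ :=
  ∑ u ∈ S, ∑ v ∈ Sᶜ, dem H u v

/-- Number of edges of `H` crossing the cut `(A, [n]∖A)`. -/
def bdry (H : SimpleGraph (Fin n)) [DecidableRel H.Adj] (A : Finset (Fin n)) : ℕ :=
  ∑ i ∈ A, ∑ j ∈ Aᶜ, if H.Adj i j then 1 else 0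

lemma deg_eq (H : SimpleGraph (Fin n)) [DecidableRel H.Adj] (i : Fin n) :
    (H.degree i : ℝ) = ∑ j, if H.Adj i j then (1 : ℝ) else 0 := by
  rw [Finset.sum_boole, ← SimpleGraph.card_neighborFinset_eq_degree,
    SimpleGraph.neighborFinset_eq_filter]

lemma sum_d (H : SimpleGraph (Fin n)) [DecidableRel H.Adj] (hm : 0 < m H) :
    ∑ i, (H.degree i : ℝ) / (2 * m H) = 1 := by
  rw [← Finset.sum_div]
  have h : (∑ i, (H.degree i : ℝ)) = 2 * m H := by
    have := H.sum_degrees_eq_twice_card_edges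
    unfold m
    exact_mod_cast this
  rw [h]
  have : (0 : ℝ) < m H := by exact_mod_cast hm
  field_simp

lemma cut_sum (S : Finset (W n)) (f : W n → W n → ℝ) :
    ∑ u ∈ S, ∑ v ∈ Sᶜ, f u v = ∑ u, ∑ v, if u ∈ S ∧ v ∉ S then f u v else 0 := by
  rw [← Finset.sum_filter_add_sum_filter_not univ (fun u => u ∈ S)]
  rw [Finset.sum_eq_zero (s := univ.filter (fun u => u ∉ S))]
  · rw [add_zero]
    apply Finset.sum_congr
    · ext; simp
    · intro u hu
      have hu' : u ∈ S := by simpa using hu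
      simp only [hu', true_and]
      rw [← Finset.sum_filter]
      apply Finset.sum_congr
      · ext; simp
      · intros; rfl
  · intro u hu
    have hu' : u ∉ S := by simpa using hu
    simp [hu']

lemma cutCap_eq (H : SimpleGraph (Fin n)) [DecidableRel H.Adj] (S : Finset (W n)) :
    cutCap H S = ∑ i : Fin n, (H.degree i : ℝ) / (2 * m H) *
      (if (Sum.inl i : W n) ∈ S then
        (if (Sum.inr true : W n) ∈ S then 0 else 1) + (if (Sum.inr false : W n) ∈ S then 0 else 1)
       else (if (Sum.inr true : W n) ∈ S then 1 else 0)
        + (if (Sum.inr false : W n) ∈ S then 1 else 0)) := by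
  unfold cutCap
  rw [cut_sum, Fintype.sum_sum_type]
  simp only [Fintype.sum_sum_type, Fintype.sum_bool, cap, ite_self, Finset.sum_const_zero,
    zero_add, add_zero]
  rw [← Finset.sum_add_distrib, ← Finset.sum_add_distrib]
  apply Finset.sum_congr rfl
  intro i _
  by_cases h1 : (Sum.inl i : W n) ∈ S <;> by_cases h2 : (Sum.inr true : W n) ∈ S <;>
    by_cases h3 : (Sum.inr false : W n) ∈ S <;> simp [h1, h2, h3] <;> ring

/-- The trace of a cut on `[n]`. -/
def tr (S : Finset (W n)) : Finset (Fin n) := univ.filter (fun i => (Sum.inl i : W n) ∈ S)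

lemma mem_tr (S : Finset (W n)) (i : Fin n) : i ∈ tr S ↔ (Sum.inl i : W n) ∈ S := by
  simp [tr]

lemma bdry_eq (H : SimpleGraph (Fin n)) [DecidableRel H.Adj] (A : Finset (Fin n)) :
    (bdry H A : ℝ) = ∑ i ∈ A, ∑ j ∈ Aᶜ, if H.Adj i j then (1 : ℝ) else 0 := by
  unfold bdry
  push_cast
  rfl

lemma bdry_eq' (H : SimpleGraph (Fin n)) [DecidableRel H.Adj] (A : Finset (Fin n)) :
    (bdry H A : ℝ) = ∑ i, ∑ j, if i ∈ A ∧ j ∉ A then (if H.Adj i j then (1 : ℝ) else 0) else 0 := by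
  rw [bdry_eq, ← Finset.sum_filter_add_sum_filter_not univ (fun u => u ∈ A),
    Finset.sum_eq_zero (s := univ.filter (fun u => u ∉ A))]
  · rw [add_zero]
    apply Finset.sum_congr
    · ext; simp
    · intro u hu
      have hu' : u ∈ A := by simpa using hu
      simp only [hu', true_and]
      rw [← Finset.sum_filter (fun j => j ∉ A)]
      apply Finset.sum_congr
      · ext; simp
      · intros; rfl
  · intro u hu
    have hu' : u ∉ A := by simpa using hu
    simp [hu']

lemma cutDem_eq (H : SimpleGraph (Fin n)) [DecidableRel H.Adj] (S : Finset (W n)) :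
    cutDem H S = (bdry H (tr S) : ℝ) / m H := by
  unfold cutDem
  rw [cut_sum, Fintype.sum_sum_type, bdry_eq']
  simp only [Fintype.sum_sum_type, Fintype.sum_bool, dem, ite_self, Finset.sum_const_zero,
    add_zero, Finset.sum_div, mem_tr]
  apply Finset.sum_congr rfl
  intro i _
  apply Finset.sum_congr rfl
  intro j _
  split_ifs <;> simp

lemma bdry_le (H : SimpleGraph (Fin n)) [DecidableRel H.Adj] (A : Finset (Fin n)) :
    (bdry H A : ℝ) ≤ ∑ i, if i ∈ A then (H.degree i : ℝ) else 0 := by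
  rw [bdry_eq']
  apply Finset.sum_le_sum
  intro i _
  by_cases h : i ∈ A
  · rw [if_pos h, deg_eq]
    apply Finset.sum_le_sum
    intro j _
    split_ifs <;> simp
  · simp [h]

lemma bdry_le' (H : SimpleGraph (Fin n)) [DecidableRel H.Adj] (A : Finset (Fin n)) :
    (bdry H A : ℝ) ≤ ∑ i, if i ∈ A then 0 else (H.degree i : ℝ) := by
  rw [bdry_eq', Finset.sum_comm]
  apply Finset.sum_le_sum
  intro i _
  by_cases h : i ∈ A
  · simp [h]
  · rw [if_neg h, deg_eq]
    apply Finset.sum_le_sum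
    intro j _
    have hc := H.adj_comm i j
    split_ifs <;> simp_all

lemma cutCap_sep (H : SimpleGraph (Fin n)) [DecidableRel H.Adj] (hm : 0 < m H)
    (S : Finset (W n)) (hS : ((Sum.inr false : W n) ∈ S) ↔ ((Sum.inr true : W n) ∉ S)) :
    cutCap H S = 1 := by
  rw [cutCap_eq]
  refine Eq.trans ?_ (sum_d H hm)
  apply Finset.sum_congr rfl
  intro i _
  by_cases h : (Sum.inr true : W n) ∈ S
  · have h2 : (Sum.inr false : W n) ∉ S := fun h3 => hS.1 h3 h
    simp [h, h2]
  · have h2 := hS.2 h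
    simp [h, h2]

lemma cutDem_le_cutCap (H : SimpleGraph (Fin n)) [DecidableRel H.Adj] (hm : 0 < m H)
    (S : Finset (W n)) (hS : ((Sum.inr false : W n) ∈ S) ↔ ((Sum.inr true : W n) ∈ S)) :
    cutDem H S ≤ cutCap H S := by
  have hm' : (0 : ℝ) < m H := by exact_mod_cast hm
  rw [cutCap_eq, cutDem_eq, div_le_iff₀ hm', Finset.sum_mul]
  by_cases h : (Sum.inr true : W n) ∈ S
  · refine (bdry_le' H _).trans (le_of_eq (Finset.sum_congr rfl fun i _ => ?_))
    simp only [hS, h, mem_tr, if_true]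
    split_ifs <;> field_simp <;> norm_num
  · refine (bdry_le H _).trans (le_of_eq (Finset.sum_congr rfl fun i _ => ?_))
    simp only [hS, h, mem_tr, if_false]
    split_ifs <;> field_simp <;> norm_num

/-- The instance `G₁` satisfies:
(i) if `H` has a cut of size `c·m`, then `G₁` has an `s–t`-separating cut of capacity
exactly `1` that separates at least `c` units of demand;
(ii) every `s–t`-separating cut of `G₁` has capacity at least `1`;
(iii) if the maximum cut of `H` has size `s·m` with `s > 0`, then every
`s–t`-separating cut of `G₁` (of positive demand, so that the sparsity is defined)
has sparsity at least `1/s`;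
(iv) every cut of `G₁` that does not separate `s` from `t` and cuts positive demand
has sparsity at least `1`. -/
theorem stmt_6 (H : SimpleGraph (Fin n)) [DecidableRel H.Adj]
    (hconn : H.Connected) (hm : 0 < m H) :
    (∀ c : ℝ, (∃ A : Finset (Fin n), (bdry H A : ℝ) = c * (m H : ℝ)) →
      ∃ S : Finset (W n), (((Sum.inr false : W n) ∈ S) ↔ ((Sum.inr true : W n) ∉ S)) ∧
        cutCap H S = 1 ∧ c ≤ cutDem H S) ∧
    (∀ S : Finset (W n), (((Sum.inr false : W n) ∈ S) ↔ ((Sum.inr true : W n) ∉ S)) →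
      1 ≤ cutCap H S) ∧
    (∀ s : ℝ, 0 < s →
      (∃ A : Finset (Fin n), (bdry H A : ℝ) = s * (m H : ℝ)) →
      (∀ A : Finset (Fin n), (bdry H A : ℝ) ≤ s * (m H : ℝ)) →
      ∀ S : Finset (W n), (((Sum.inr false : W n) ∈ S) ↔ ((Sum.inr true : W n) ∉ S)) →
        0 < cutDem H S → 1 / s ≤ cutCap H S / cutDem H S) ∧
    (∀ S : Finset (W n), (((Sum.inr false : W n) ∈ S) ↔ ((Sum.inr true : W n) ∈ S)) →
      0 < cutDem H S → 1 ≤ cutCap H S / cutDem H S) := by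
  have hm' : (0 : ℝ) < m H := by exact_mod_cast hm
  refine ⟨?_, ?_, ?_, ?_⟩
  · rintro c ⟨A, hA⟩
    let S : Finset (W n) := univ.filter
      (fun u => Sum.elim (fun i => i ∈ A) (fun b => b = false) u)
    have hS : ((Sum.inr false : W n) ∈ S) ↔ ((Sum.inr true : W n) ∉ S) := by simp [S]
    refine ⟨S, hS, cutCap_sep H hm S hS, ?_⟩
    have : tr S = A := by ext i; simp [mem_tr, S]
    rw [cutDem_eq, this, hA]
    field_simp
    exact le_rfl
  · intro S hS
    exact (cutCap_sep H hm S hS).ge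
  · intro s hs _ hmax S hS hpos
    rw [cutCap_sep H hm S hS]
    apply one_div_le_one_div_of_le hpos
    rw [cutDem_eq, div_le_iff₀ hm']
    exact hmax _
  · intro S hS hpos
    rw [le_div_iff₀ hpos, one_mul]
    exact cutDem_le_cutCap H hm S hS

end

end Stmt6
end

section
/- If the base instance G₁ has an admissible cut (A, Ā) of capacity cap(A,Ā) separating dem(A,Ā) units of demand, then for every ℓ ≥ 1 the powered instance G_ℓ has an admissible cut of capacity (cap(A,Ā))^ℓ that separates dem(A,Ā)·Σ_{i=0}^{ℓ−1} cap(A,Ā)^i units of demand. -/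
attribute [local instance] Classical.propDecidable

open Finset

namespace Stmt7

/-- A Sparsest Cut instance: a finite vertex set `V` with two designated vertices
`s` and `t`, a finite set `E` of (oriented) supply edges with capacities `cap`, and a
finite set `Dm` of demand pairs with demands `dem`. -/
structure SCI where
  V : Type
  fV : Fintype V
  dV : DecidableEq V
  s : V
  t : V
  E : Finset (V × V)
  cap : V × V → ℝ
  Dm : Finset (V × V)
  dem : V × V → ℝ

attribute [instance] SCI.fV SCI.dV

namespace SCI

/-- Capacity of a cut `(S, V∖S)`: total capacity of supply edges crossing it. -/
noncomputable def cutCap (I : SCI) (S : Finset I.V) : ℝ :=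
  ∑ e ∈ I.E.filter (fun e => ¬((e.1 ∈ S) ↔ (e.2 ∈ S))), I.cap e

/-- Demand separated by a cut `(S, V∖S)`: total demand of demand pairs crossing it. -/
noncomputable def cutDem (I : SCI) (S : Finset I.V) : ℝ :=
  ∑ q ∈ I.Dm.filter (fun q => ¬((q.1 ∈ S) ↔ (q.2 ∈ S))), I.dem q

end SCI

/-- Vertex set obtained by replacing each capacity edge `e = (u,v)` of `G1` by a copy
of `Gp`, identifying the `s` of the copy with `u` and its `t` with `v`:  the vertices
of `G1` together with, for every edge `e` of `G1`, a copy of the interior (non-`s`,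
non-`t`) vertices of `Gp`. -/
abbrev glueV (G1 Gp : SCI) : Type :=
  G1.V ⊕ ({e // e ∈ G1.E} × {v : Gp.V // v ≠ Gp.s ∧ v ≠ Gp.t})

/-- Placement of a vertex `v` of the copy of `Gp` corresponding to edge `e` of `G1`:
the copy's `s` is identified with `e.1`, its `t` with `e.2`, and interior vertices
keep their identity inside the copy. -/
noncomputable def embed (G1 Gp : SCI) (e : {e // e ∈ G1.E}) (v : Gp.V) : glueV G1 Gp :=
  if h1 : v = Gp.s then Sum.inl e.1.1
  else if h2 : v = Gp.t then Sum.inl e.1.2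
  else Sum.inr (e, ⟨v, h1, h2⟩)

/-- One step of the powering operation: replace every capacity edge `e = (u,v)` of
`G1` by a copy of `Gp` (scaled by `cap e`, with its `s` identified with `u` and its
`t` with `v`), and retain the demand edges of `G1` as the new top-level demands. -/
noncomputable def glue (G1 Gp : SCI) : SCI where
  V := glueV G1 Gp
  fV := inferInstance
  dV := inferInstance
  s := Sum.inl G1.s
  t := Sum.inl G1.t
  E := G1.E.attach.biUnion fun e =>
        Gp.E.image fun f => (embed G1 Gp e f.1, embed G1 Gp e f.2)
  cap := fun p => ∑ e ∈ G1.E.attach, ∑ f ∈ Gp.E,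
        if (embed G1 Gp e f.1, embed G1 Gp e f.2) = p then G1.cap e.1 * Gp.cap f else 0
  Dm := (G1.Dm.image fun q => ((Sum.inl q.1 : glueV G1 Gp), (Sum.inl q.2 : glueV G1 Gp))) ∪
        (G1.E.attach.biUnion fun e =>
          Gp.Dm.image fun f => (embed G1 Gp e f.1, embed G1 Gp e f.2))
  dem := fun p =>
      (∑ q ∈ G1.Dm,
        if ((Sum.inl q.1 : glueV G1 Gp), (Sum.inl q.2 : glueV G1 Gp)) = p
        then G1.dem q else 0) +
      ∑ e ∈ G1.E.attach, ∑ f ∈ Gp.Dm,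
        if (embed G1 Gp e f.1, embed G1 Gp e f.2) = p then G1.cap e.1 * Gp.dem f else 0

/-- The powered instance: `Gpow G1 k` is the instance `G_{k+1}` of the paper, i.e.
`Gpow G1 0 = G₁` and `Gpow G1 k = G_{k+1}` is obtained from `G₁` by replacing each
capacity edge with a copy of `G_k`. -/
noncomputable def Gpow (G1 : SCI) : ℕ → SCI
  | 0 => G1
  | k + 1 => glue G1 (Gpow G1 k)

theorem mem_biUnion_aux {α β : Type*} {_ : DecidableEq β} {s : Finset α} {f : α → Finset β}
    {a : α} {b : β} (ha : a ∈ s) (hb : b ∈ f a) : b ∈ s.biUnion f :=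
  Finset.mem_biUnion.2 ⟨a, ha, hb⟩

theorem mem_image_aux {α β : Type*} {_ : DecidableEq β} {s : Finset α} (f : α → β)
    {a : α} (ha : a ∈ s) : f a ∈ s.image f :=
  Finset.mem_image_of_mem f ha

theorem mem_union_aux {α : Type*} {_ : DecidableEq α} {s t : Finset α} {a : α}
    (h : a ∈ s ∨ a ∈ t) : a ∈ s ∪ t :=
  Finset.mem_union.2 h

theorem sum_filter_collapse {α ι : Type*} (T : Finset α) (P : α → Prop) (I : Finset ι)
    (φ : ι → α) (c : ι → ℝ)
    {_ : DecidablePred P} {_ : ∀ i p, Decidable (φ i = p)} (h : ∀ i ∈ I, φ i ∈ T) :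
    ∑ p ∈ T.filter P, ∑ i ∈ I, (if φ i = p then c i else 0)
      = ∑ i ∈ I, if P (φ i) then c i else 0 := by
  rw [Finset.sum_comm]
  refine Finset.sum_congr rfl fun i hi => ?_
  rw [Finset.sum_filter, Finset.sum_eq_single (φ i)]
  · simp
  · intro b _ hb
    simp [hb.symm]
  · intro hn
    exact absurd (h i hi) hn

theorem sum_filter_collapse₂ {α ι κ : Type*} (T : Finset α) (P : α → Prop) (I : Finset ι)
    (J : Finset κ) (φ : ι → κ → α) (c : ι → κ → ℝ)
    {_ : DecidablePred P} {_ : ∀ i j p, Decidable (φ i j = p)}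
    (h : ∀ i ∈ I, ∀ j ∈ J, φ i j ∈ T) :
    ∑ p ∈ T.filter P, ∑ i ∈ I, ∑ j ∈ J, (if φ i j = p then c i j else 0)
      = ∑ i ∈ I, ∑ j ∈ J, if P (φ i j) then c i j else 0 := by
  rw [Finset.sum_comm]
  refine Finset.sum_congr rfl fun i hi => ?_
  exact sum_filter_collapse T P J (φ i) (c i) (h i hi)

theorem glue_sum (G1 : SCI) {κ : Type*} (A : Finset G1.V) (J : Finset κ)
    (Q : κ → Prop) (R : {e // e ∈ G1.E} → κ → Prop) (d : κ → ℝ)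
    {_ : ∀ e j, Decidable (R e j)} {_ : DecidablePred Q}
    (hR : ∀ e j, R e j ↔ (¬((e.1.1 ∈ A) ↔ (e.1.2 ∈ A)) ∧ Q j)) :
    ∑ e ∈ G1.E.attach, ∑ j ∈ J, (if R e j then G1.cap e.1 * d j else 0)
      = G1.cutCap A * ∑ j ∈ J.filter Q, d j := by
  unfold SCI.cutCap
  rw [Finset.sum_filter, Finset.sum_filter, ← Finset.sum_attach G1.E, Finset.sum_mul_sum]
  refine Finset.sum_congr rfl fun e _ => Finset.sum_congr rfl fun j _ => ?_
  have := hR e j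
  by_cases h1 : ((e.1.1 ∈ A) ↔ (e.1.2 ∈ A)) <;> by_cases h2 : Q j <;> simp_all

/-- The lifted cut. -/
noncomputable def liftCut (G1 Gp : SCI) (A : Finset G1.V) (B : Finset Gp.V) :
    Finset (glueV G1 Gp) :=
  Finset.univ.filter (Sum.elim (fun v => v ∈ A) (fun x =>
    if ((x.1.1.1 ∈ A) ↔ (x.1.1.2 ∈ A)) then x.1.1.1 ∈ A
    else (x.1.1.1 ∈ A ↔ (x.2.1 ∈ B ↔ Gp.s ∈ B))))

theorem mem_liftCut_inl (G1 Gp : SCI) (A : Finset G1.V) (B : Finset Gp.V) (v : G1.V) :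
    (Sum.inl v : glueV G1 Gp) ∈ liftCut G1 Gp A B ↔ v ∈ A := by
  simp [liftCut]

theorem mem_liftCut_embed (G1 Gp : SCI) (A : Finset G1.V) (B : Finset Gp.V)
    (hB : ¬((Gp.s ∈ B) ↔ (Gp.t ∈ B))) (e : {e // e ∈ G1.E}) (v : Gp.V) :
    embed G1 Gp e v ∈ liftCut G1 Gp A B ↔
      (if ((e.1.1 ∈ A) ↔ (e.1.2 ∈ A)) then e.1.1 ∈ A
        else (e.1.1 ∈ A ↔ (v ∈ B ↔ Gp.s ∈ B))) := by
  unfold embed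
  split_ifs with h1 h2 h3 h4 h5
  all_goals first
    | (rw [mem_liftCut_inl]; subst_vars; tauto)
    | (simp only [liftCut, Finset.mem_filter, Finset.mem_univ, true_and, Sum.elim_inr]
       simp [*])

theorem cross_embed (G1 Gp : SCI) (A : Finset G1.V) (B : Finset Gp.V)
    (hB : ¬((Gp.s ∈ B) ↔ (Gp.t ∈ B))) (e : {e // e ∈ G1.E}) (f : Gp.V × Gp.V) :
    ¬((embed G1 Gp e f.1 ∈ liftCut G1 Gp A B) ↔ (embed G1 Gp e f.2 ∈ liftCut G1 Gp A B)) ↔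
      (¬((e.1.1 ∈ A) ↔ (e.1.2 ∈ A)) ∧ ¬((f.1 ∈ B) ↔ (f.2 ∈ B))) := by
  rw [mem_liftCut_embed _ _ _ _ hB, mem_liftCut_embed _ _ _ _ hB]
  split_ifs <;> tauto

theorem glue_cap (G1 Gp : SCI) (A : Finset G1.V) (B : Finset Gp.V)
    (hB : ¬((Gp.s ∈ B) ↔ (Gp.t ∈ B))) :
    (glue G1 Gp).cutCap (liftCut G1 Gp A B) = G1.cutCap A * Gp.cutCap B := by
  refine (sum_filter_collapse₂ (glue G1 Gp).E _ G1.E.attach Gp.E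
    (fun e f => (embed G1 Gp e f.1, embed G1 Gp e f.2))
    (fun e f => G1.cap e.1 * Gp.cap f) ?_).trans ?_
  · intro e he f hf
    exact mem_biUnion_aux he (mem_image_aux _ hf)
  · exact glue_sum G1 A Gp.E _ _ Gp.cap (fun e f => cross_embed G1 Gp A B hB e f)

theorem glue_dem (G1 Gp : SCI) (A : Finset G1.V) (B : Finset Gp.V)
    (hB : ¬((Gp.s ∈ B) ↔ (Gp.t ∈ B))) :
    (glue G1 Gp).cutDem (liftCut G1 Gp A B)
      = G1.cutDem A + G1.cutCap A * Gp.cutDem B := by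
  refine (Finset.sum_add_distrib).trans ?_
  congr 1
  · refine (sum_filter_collapse (glue G1 Gp).Dm _ G1.Dm
      (fun q => ((Sum.inl q.1 : glueV G1 Gp), (Sum.inl q.2 : glueV G1 Gp)))
      G1.dem (h := ?_)).trans ?_
    · intro q hq
      exact mem_union_aux (Or.inl <| mem_image_aux _ hq)
    · unfold SCI.cutDem
      rw [Finset.sum_filter]
      refine Finset.sum_congr rfl fun q _ => ?_
      refine @if_congr _ _ _ (_) (_) _ _ _ _ ?_ rfl rfl
      exact not_congr (iff_congr (mem_liftCut_inl ..) (mem_liftCut_inl ..))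
  · refine (sum_filter_collapse₂ (glue G1 Gp).Dm _ G1.E.attach Gp.Dm
      (fun e f => (embed G1 Gp e f.1, embed G1 Gp e f.2))
      (fun e f => G1.cap e.1 * Gp.dem f) ?_).trans ?_
    · intro e he f hf
      exact mem_union_aux
        (Or.inr <| mem_biUnion_aux he (mem_image_aux _ hf))
    · exact glue_sum G1 A Gp.Dm _ _ Gp.dem (fun e f => cross_embed G1 Gp A B hB e f)

/-- If the base instance `G₁` has an admissible (`s`–`t`-separating)
cut `(A, Ā)` of capacity `cap(A,Ā)` separating `dem(A,Ā)` units of demand, then for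
every `ℓ ≥ 1` the powered instance `G_ℓ` has an admissible cut of capacity
`cap(A,Ā)^ℓ` that separates `dem(A,Ā) · Σ_{i=0}^{ℓ−1} cap(A,Ā)^i` units of demand. -/
theorem stmt_7 (G1 : SCI) (hst : G1.s ≠ G1.t)
    (hloop : ∀ e ∈ G1.E, e.1 ≠ e.2)
    (hcap : ∀ e ∈ G1.E, 0 < G1.cap e)
    (hdem : ∀ q ∈ G1.Dm, 0 ≤ G1.dem q)
    (A : Finset G1.V) (hA : ¬((G1.s ∈ A) ↔ (G1.t ∈ A)))
    (ℓ : ℕ) (hℓ : 1 ≤ ℓ) :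
    ∃ B : Finset (Gpow G1 (ℓ - 1)).V,
      ¬(((Gpow G1 (ℓ - 1)).s ∈ B) ↔ ((Gpow G1 (ℓ - 1)).t ∈ B)) ∧
      (Gpow G1 (ℓ - 1)).cutCap B = G1.cutCap A ^ ℓ ∧
      (Gpow G1 (ℓ - 1)).cutDem B = G1.cutDem A * ∑ i ∈ Finset.range ℓ, G1.cutCap A ^ i := by
  obtain ⟨k, rfl⟩ : ∃ k, ℓ = k + 1 := ⟨ℓ - 1, by omega⟩
  clear hℓ
  rw [Nat.add_sub_cancel]
  induction k with
  | zero => exact ⟨A, hA, by simp [Gpow], by simp [Gpow]⟩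
  | succ k ih =>
    obtain ⟨B, hB, hc, hd⟩ := ih
    refine ⟨liftCut G1 (Gpow G1 k) A B, ?_, ?_, ?_⟩
    · exact (not_congr (iff_congr (mem_liftCut_inl ..) (mem_liftCut_inl ..))).2 hA
    · refine (glue_cap G1 (Gpow G1 k) A B hB).trans ?_
      rw [hc]; ring
    · refine (glue_dem G1 (Gpow G1 k) A B hB).trans ?_
      rw [hd, geom_sum_succ (n := k + 1)]; ring

end Stmt7
end

section
/- For any Sparsest Cut instance (G,D) in which the supply graph G is connected and at least one cut separates positive demand, there exists a sparsest cut (S, V∖S) — a cut of minimum sparsity — such that both induced subgraphs G[S] and G[V∖S] are connected. -/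
attribute [local instance] Classical.propDecidable

open Finset

namespace Stmt8

/-- Total capacity of the supply edges crossing the cut `(S, V∖S)`. -/
noncomputable def cutCap {V : Type*} [Fintype V] (G : SimpleGraph V)
    (cap : V → V → ℝ) (S : Finset V) : ℝ :=
  ∑ u ∈ S, ∑ v ∈ Sᶜ, if G.Adj u v then cap u v else 0

/-- Total demand crossing the cut `(S, V∖S)`. -/
noncomputable def cutDem {V : Type*} [Fintype V] (dem : V → V → ℝ) (S : Finset V) : ℝ :=
  ∑ u ∈ S, ∑ v ∈ Sᶜ, dem u v

/-- Cut weight as a full double sum. -/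
theorem cut_eq {V : Type*} [Fintype V] (w : V → V → ℝ) (S : Finset V) :
    ∑ u ∈ S, ∑ v ∈ Sᶜ, w u v = ∑ u, ∑ v, if u ∈ S ∧ v ∉ S then w u v else 0 := by
  rw [← Finset.sum_subset (Finset.subset_univ S)]
  · refine Finset.sum_congr rfl fun u hu => ?_
    rw [← Finset.sum_subset (Finset.subset_univ Sᶜ)]
    · refine Finset.sum_congr rfl fun v hv => ?_
      rw [Finset.mem_compl] at hv
      simp [hu, hv]
    · intro v _ hv
      rw [Finset.mem_compl, not_not] at hv
      simp [hv]
  · intro u _ hu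
    simp [hu]

theorem cut_compl {V : Type*} [Fintype V] (w : V → V → ℝ) (hw : ∀ u v, w u v = w v u)
    (S : Finset V) :
    ∑ u ∈ Sᶜ, ∑ v ∈ Sᶜᶜ, w u v = ∑ u ∈ S, ∑ v ∈ Sᶜ, w u v := by
  rw [compl_compl, Finset.sum_comm]
  exact Finset.sum_congr rfl fun u _ => Finset.sum_congr rfl fun v _ => hw v u

theorem cutCap_pos {V : Type*} [Fintype V] (G : SimpleGraph V)
    (hG : G.Connected) (cap : V → V → ℝ)
    (hcappos : ∀ u v, G.Adj u v → 0 < cap u v)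
    (A : Finset V) (a b : V) (ha : a ∈ A) (hb : b ∉ A) : 0 < cutCap G cap A := by
  obtain ⟨p⟩ := hG.preconnected a b
  obtain ⟨d, -, h1, h2⟩ := p.exists_boundary_dart (A : Set V) (by simpa using ha)
    (by simpa using hb)
  have hnn : ∀ u v, 0 ≤ if G.Adj u v then cap u v else 0 := by
    intro u v
    split_ifs with h
    · exact (hcappos u v h).le
    · exact le_rfl
  unfold cutCap
  refine Finset.sum_pos' (fun u _ => Finset.sum_nonneg fun v _ => hnn u v) ⟨d.fst, by simpa using h1, ?_⟩
  refine Finset.sum_pos' (fun v _ => hnn _ v) ⟨d.snd, by simpa using h2, ?_⟩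
  rw [if_pos d.adj]
  exact hcappos _ _ d.adj

set_option maxHeartbeats 2000000 in
theorem side_connected {V : Type*} [Fintype V] (G : SimpleGraph V)
    (hG : G.Connected)
    (cap dem : V → V → ℝ)
    (hcappos : ∀ u v, G.Adj u v → 0 < cap u v)
    (hdem0 : ∀ u v, 0 ≤ dem u v) (r : ℝ) (hr : 0 ≤ r)
    (hf : ∀ A : Finset V, r * cutDem dem A ≤ cutCap G cap A)
    (S : Finset V) (hS : 0 < cutDem dem S) (hfS : cutCap G cap S = r * cutDem dem S)
    (hmin : ∀ A : Finset V, 0 < cutDem dem A → cutCap G cap A = r * cutDem dem A →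
      cutCap G cap S ≤ cutCap G cap A) :
    (G.induce (S : Set V)).Connected := by
  have hne : S.Nonempty := by
    rw [Finset.nonempty_iff_ne_empty]
    rintro rfl
    simp [cutDem] at hS
  obtain ⟨s, hs⟩ := hne
  haveI : Nonempty (S : Set V) := ⟨⟨s, by simpa using hs⟩⟩
  refine ⟨?_⟩
  by_contra hcon
  unfold SimpleGraph.Preconnected at hcon
  push Not at hcon
  obtain ⟨x, y, hxy⟩ := hcon
  let A : Finset V := S.filter fun z => ∃ h : z ∈ (S : Set V), (G.induce (S : Set V)).Reachable x ⟨z, h⟩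
  let B : Finset V := S.filter fun z => z ∉ A
  have hAS : ∀ z, z ∈ A → z ∈ S := fun z hz => (Finset.mem_filter.1 hz).1
  have hB : ∀ z, z ∈ B ↔ z ∈ S ∧ z ∉ A := fun z => Finset.mem_filter
  have hxA : (x : V) ∈ A := Finset.mem_filter.2 ⟨by simpa using x.2, x.2, SimpleGraph.Reachable.refl _⟩
  have hyA : (y : V) ∉ A := by
    intro h
    obtain ⟨_, _, h⟩ := Finset.mem_filter.1 h
    exact hxy h
  have hyB : (y : V) ∈ B := (hB _).2 ⟨by simpa using y.2, hyA⟩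
  have hxB : (x : V) ∉ B := fun h => ((hB _).1 h).2 hxA
  have hno : ∀ a b, a ∈ A → b ∈ B → ¬ G.Adj a b := by
    intro a b ha hb hadj
    obtain ⟨hbS, hbA⟩ := (hB _).1 hb
    obtain ⟨_, ha', hra⟩ := Finset.mem_filter.1 ha
    apply hbA
    refine Finset.mem_filter.2 ⟨hbS, by simpa using hbS, hra.trans ?_⟩
    apply SimpleGraph.Adj.reachable
    simpa using hadj
  clear_value A B
  have hcA := cutCap_pos G hG cap hcappos A x y hxA hyA
  have hcB := cutCap_pos G hG cap hcappos B y x hyB hxB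
  have hcap : cutCap G cap A + cutCap G cap B = cutCap G cap S := by
    unfold cutCap
    rw [cut_eq (fun u v => if G.Adj u v then cap u v else 0) A,
      cut_eq (fun u v => if G.Adj u v then cap u v else 0) B,
      cut_eq (fun u v => if G.Adj u v then cap u v else 0) S]
    simp only [← Finset.sum_add_distrib]
    refine Finset.sum_congr rfl fun u _ => Finset.sum_congr rfl fun v _ => ?_
    clear hcA hcB hmin hfS hS hf
    have h1 := hno u v
    have h2 := hno v u
    rw [G.adj_comm v u] at h2
    have h3 := hAS u
    have h4 := hAS v
    rw [hB] at h1 h2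
    simp only [hB]
    by_cases a1 : u ∈ A <;> by_cases a2 : v ∈ A <;> by_cases a3 : u ∈ S <;>
      by_cases a4 : v ∈ S <;> by_cases a5 : G.Adj u v <;> simp_all
  have hdem : cutDem dem S ≤ cutDem dem A + cutDem dem B := by
    unfold cutDem
    rw [cut_eq dem A, cut_eq dem B, cut_eq dem S]
    simp only [← Finset.sum_add_distrib]
    refine Finset.sum_le_sum fun u _ => Finset.sum_le_sum fun v _ => ?_
    clear hcA hcB hmin hfS hS hf hcap hno
    have h3 := hAS u
    have h4 := hAS v
    have h5 := hdem0 u v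
    simp only [hB]
    by_cases a1 : u ∈ A <;> by_cases a2 : v ∈ A <;> by_cases a3 : u ∈ S <;>
      by_cases a4 : v ∈ S <;> simp_all
  have h1 := hf A
  have h2 := hf B
  have h3 := mul_le_mul_of_nonneg_left hdem hr
  have hA : cutCap G cap A = r * cutDem dem A := by linarith
  have hdA : 0 < cutDem dem A := by
    rw [hA] at hcA
    exact pos_of_mul_pos_right hcA hr
  have := hmin A hdA hA
  linarith

/-- For any Sparsest Cut instance `(G, D)` in which the supply graph
`G` is connected and at least one cut separates positive demand, there exists a
sparsest cut `(S, V∖S)` — a cut of minimum sparsity among cuts separating positive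
demand — such that both induced subgraphs `G[S]` and `G[V∖S]` are connected. -/
theorem stmt_8 {V : Type*} [Fintype V] [DecidableEq V] (G : SimpleGraph V)
    (hG : G.Connected)
    (cap dem : V → V → ℝ)
    (hcapsymm : ∀ u v, cap u v = cap v u)
    (hcappos : ∀ u v, G.Adj u v → 0 < cap u v)
    (hdemsymm : ∀ u v, dem u v = dem v u)
    (hdem0 : ∀ u v, 0 ≤ dem u v)
    (hpos : ∃ S : Finset V, 0 < cutDem dem S) :
    ∃ S : Finset V, 0 < cutDem dem S ∧
      (∀ S' : Finset V, 0 < cutDem dem S' →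
        cutCap G cap S / cutDem dem S ≤ cutCap G cap S' / cutDem dem S') ∧
      (G.induce (S : Set V)).Connected ∧
      (G.induce (((Sᶜ : Finset V) : Set V))).Connected := by
  have hcap0 : ∀ S : Finset V, 0 ≤ cutCap G cap S := by
    intro S
    refine Finset.sum_nonneg fun u _ => Finset.sum_nonneg fun v _ => ?_
    split_ifs with h
    · exact (hcappos u v h).le
    · exact le_rfl
  have hD0 : ∀ S : Finset V, 0 ≤ cutDem dem S := fun S =>
    Finset.sum_nonneg fun u _ => Finset.sum_nonneg fun v _ => hdem0 u v
  obtain ⟨S₀, hS₀⟩ := hpos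
  obtain ⟨S₁, hS₁, hm₁⟩ := Set.exists_min_image {S : Finset V | 0 < cutDem dem S}
    (fun S => cutCap G cap S / cutDem dem S) (Set.toFinite _) ⟨S₀, hS₀⟩
  simp only [Set.mem_setOf_eq] at hS₁ hm₁
  obtain ⟨r, hrdef⟩ : ∃ r, r = cutCap G cap S₁ / cutDem dem S₁ := ⟨_, rfl⟩
  rw [← hrdef] at hm₁
  have hr : 0 ≤ r := hrdef ▸ div_nonneg (hcap0 _) (hD0 _)
  have hf : ∀ A : Finset V, r * cutDem dem A ≤ cutCap G cap A := by
    intro A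
    rcases (hD0 A).eq_or_lt with h | h
    · rw [← h, mul_zero]
      exact hcap0 A
    · exact (le_div_iff₀ h).1 (hm₁ A h)
  obtain ⟨S, ⟨hS, hfS⟩, hmin⟩ := Set.exists_min_image
    {S : Finset V | 0 < cutDem dem S ∧ cutCap G cap S = r * cutDem dem S}
    (fun S => cutCap G cap S) (Set.toFinite _)
    ⟨S₁, hS₁, by rw [hrdef, div_mul_cancel₀ _ hS₁.ne']⟩
  have hmin' : ∀ A : Finset V, 0 < cutDem dem A → cutCap G cap A = r * cutDem dem A →
      cutCap G cap S ≤ cutCap G cap A := fun A h1 h2 => hmin A ⟨h1, h2⟩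
  have hcc := cut_compl (fun u v => if G.Adj u v then cap u v else 0)
    (fun u v => by simp only [G.adj_comm u v, hcapsymm u v]) S
  have hdc := cut_compl dem hdemsymm S
  change cutCap G cap _ = cutCap G cap S at hcc
  change cutDem dem _ = cutDem dem S at hdc
  refine ⟨S, hS, ?_, side_connected G hG cap dem hcappos hdem0 r hr hf S hS hfS hmin', ?_⟩
  · intro S' hS'
    rw [hfS, mul_div_cancel_right₀ _ hS.ne']
    exact hm₁ S' hS'
  · have := side_connected G hG cap dem hcappos hdem0 r hr hf _ (hdc.symm ▸ hS)
      (by rw [hcc, hdc, hfS]) (by rw [hcc]; exact hmin')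
    convert this

end Stmt8
end

section
/- Let B = (U, V, E_B) be a bipartite Unique Label Cover instance with label set [d] in which every vertex of U ∪ V has degree Δ, and let H be the union-of-cliques instance derived from B. If some labeling of U ∪ V satisfies at least (1−δ)|E_B| of the constraints of B, then some labeling of V satisfies at least (1−2δ)|E_H| of the constraints of H. -/
attribute [local instance] Classical.propDecidable

open Finset

theorem count_fst {U V : Type*} [Fintype U] [Fintype V] (Δ : ℕ) (B P : U → V → Prop)
    (hdegU : ∀ u, (Finset.univ.filter fun v => B u v).card = Δ)
    (hP : ∀ u v, P u v → B u v) :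
    (Finset.univ.filter fun t : U × V × V =>
      P t.1 t.2.1 ∧ B t.1 t.2.2 ∧ t.2.1 ≠ t.2.2).card =
    (Finset.univ.filter fun p : U × V => P p.1 p.2).card * (Δ - 1) := by
  rw [Finset.card_filter, Finset.card_filter, Fintype.sum_prod_type, Fintype.sum_prod_type,
    Finset.sum_mul]
  refine Finset.sum_congr rfl fun u _ => ?_
  rw [Fintype.sum_prod_type, Finset.sum_mul]
  refine Finset.sum_congr rfl fun v _ => ?_
  rw [← Finset.card_filter]
  by_cases h : P u v
  · have hv : v ∈ Finset.univ.filter fun w => B u w := by simp [hP u v h]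
    have := Finset.card_erase_of_mem hv
    rw [hdegU] at this
    simp only [h, if_true, one_mul, ← this]
    congr 1
    ext w
    simp only [Finset.mem_filter, Finset.mem_univ, true_and, Finset.mem_erase]
    tauto
  · simp [h]

theorem count_snd {U V : Type*} [Fintype U] [Fintype V] (Δ : ℕ) (B P : U → V → Prop)
    (hdegU : ∀ u, (Finset.univ.filter fun v => B u v).card = Δ)
    (hP : ∀ u v, P u v → B u v) :
    (Finset.univ.filter fun t : U × V × V =>
      P t.1 t.2.2 ∧ B t.1 t.2.1 ∧ t.2.2 ≠ t.2.1).card =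
    (Finset.univ.filter fun p : U × V => P p.1 p.2).card * (Δ - 1) := by
  rw [← count_fst Δ B P hdegU hP]
  refine Finset.card_bij (fun t _ => (t.1, t.2.2, t.2.1)) ?_ ?_ ?_
  · simp
  · rintro ⟨a, b, c⟩ _ ⟨a', b', c'⟩ _ h
    simp only [Prod.mk.injEq] at h ⊢
    tauto
  · rintro ⟨a, b, c⟩ h
    exact ⟨(a, c, b), by simpa using h, rfl⟩

/-- Let `B = (U, V, E_B)` be a bipartite Unique Label Cover instance
with label set `[d]` in which every vertex of `U ∪ V` has degree `Δ`, and let `H` be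
the union-of-cliques instance derived from `B` (its edges are the pairs of distinct
neighbours `v, w` of a common `u ∈ U`, carrying the bijection `σ_{uw} ∘ σ_{uv}⁻¹`;
here edges of `H` are counted as ordered triples `(u, v, w)`, counting each edge of the
multigraph `H` exactly twice).  If some labeling of `U ∪ V` satisfies at least
`(1−δ)|E_B|` of the constraints of `B`, then some labeling of `V` satisfies at least
`(1−2δ)|E_H|` of the constraints of `H`. -/
theorem stmt_11 {U V : Type*} [Fintype U] [Fintype V]
    (d Δ : ℕ) (hd : 0 < d) (B : U → V → Prop)
    (σ : U → V → Equiv.Perm (Fin d))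
    (hdegU : ∀ u, (Finset.univ.filter fun v => B u v).card = Δ)
    (hdegV : ∀ v, (Finset.univ.filter fun u => B u v).card = Δ)
    (δ : ℝ) (fU : U → Fin d) (fV : V → Fin d)
    (hsat : (1 - δ) * ((Finset.univ.filter fun p : U × V => B p.1 p.2).card : ℝ) ≤
      ((Finset.univ.filter fun p : U × V =>
          B p.1 p.2 ∧ σ p.1 p.2 (fU p.1) = fV p.2).card : ℝ)) :
    ∃ g : V → Fin d,
      (1 - 2 * δ) * ((Finset.univ.filter fun t : U × V × V =>
          B t.1 t.2.1 ∧ B t.1 t.2.2 ∧ t.2.1 ≠ t.2.2).card : ℝ) ≤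
      ((Finset.univ.filter fun t : U × V × V =>
          B t.1 t.2.1 ∧ B t.1 t.2.2 ∧ t.2.1 ≠ t.2.2 ∧
          σ t.1 t.2.2 ((σ t.1 t.2.1)⁻¹ (g t.2.1)) = g t.2.2).card : ℝ) := by
  refine ⟨fV, ?_⟩
  obtain ⟨P, hP⟩ : ∃ P : U → V → Prop, ∀ u v, P u v ↔ (B u v ∧ ¬ σ u v (fU u) = fV v) :=
    ⟨_, fun _ _ => Iff.rfl⟩
  have hE := count_fst Δ B B hdegU (fun _ _ h => h)
  have h1 := count_fst Δ B P hdegU (fun u v h => ((hP u v).1 h).1)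
  have h2 := count_snd Δ B P hdegU (fun u v h => ((hP u v).1 h).1)
  have hb : (Finset.univ.filter fun p : U × V => B p.1 p.2).card =
      (Finset.univ.filter fun p : U × V => B p.1 p.2 ∧ σ p.1 p.2 (fU p.1) = fV p.2).card +
      (Finset.univ.filter fun p : U × V => P p.1 p.2).card := by
    rw [← Finset.card_filter_add_card_filter_not (s := Finset.univ.filter fun p : U × V => B p.1 p.2)
      (fun p : U × V => σ p.1 p.2 (fU p.1) = fV p.2), Finset.filter_filter, Finset.filter_filter]
    congr 2
    ext p
    simp [hP]
  have hsub : (Finset.univ.filter fun t : U × V × V =>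
      B t.1 t.2.1 ∧ B t.1 t.2.2 ∧ t.2.1 ≠ t.2.2) ⊆
      (Finset.univ.filter fun t : U × V × V =>
          B t.1 t.2.1 ∧ B t.1 t.2.2 ∧ t.2.1 ≠ t.2.2 ∧
          σ t.1 t.2.2 ((σ t.1 t.2.1)⁻¹ (fV t.2.1)) = fV t.2.2) ∪
      ((Finset.univ.filter fun t : U × V × V =>
        P t.1 t.2.1 ∧ B t.1 t.2.2 ∧ t.2.1 ≠ t.2.2) ∪
      (Finset.univ.filter fun t : U × V × V =>
        P t.1 t.2.2 ∧ B t.1 t.2.1 ∧ t.2.2 ≠ t.2.1)) := by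
    rintro ⟨u, v, w⟩ h
    simp only [Finset.mem_filter, Finset.mem_univ, true_and, Finset.mem_union, hP] at h ⊢
    obtain ⟨hv, hw, hne⟩ := h
    by_cases a : σ u v (fU u) = fV v
    · by_cases b : σ u w (fU u) = fV w
      · left
        refine ⟨hv, hw, hne, ?_⟩
        rw [← a, ← b]
        simp
      · exact Or.inr (Or.inr ⟨⟨hw, b⟩, hv, hne.symm⟩)
    · exact Or.inr (Or.inl ⟨⟨hv, a⟩, hw, hne⟩)
  have hc := (Finset.card_le_card hsub).trans ((Finset.card_union_le _ _).trans
    (Nat.add_le_add_left (Finset.card_union_le _ _) _))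
  rw [h1, h2] at hc
  have hc' := (Nat.cast_le (α := ℝ)).2 hc
  have hb' := congrArg (Nat.cast (R := ℝ)) hb
  have hE' := congrArg (Nat.cast (R := ℝ)) hE
  push_cast at hc' hb' hE'
  have hk : (0 : ℝ) ≤ ((Δ - 1 : ℕ) : ℝ) := Nat.cast_nonneg _
  have hm := mul_le_mul_of_nonneg_right hsat hk
  rw [hE'] at hc' ⊢
  rw [hb'] at hc' hm ⊢
  nlinarith [hc', hm]
end

section
/- If there exists a labeling f : V_H → [d] satisfying at least a (1−η) fraction of the constraints of the Δ-nice Unique Label Cover instance, then the gadget (G,D) has an admissible (s–t-separating) cut of capacity exactly 1 + α/2 that separates at least (1−η) units of demand. -/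
attribute [local instance] Classical.propDecidable

open Finset

namespace Stmt14

/-- The hypercube `{−1,1}^d`, encoded as `Fin d → Bool`. -/
abbrev Cube (d : ℕ) := Fin d → Bool

/-- Coordinatewise negation `x ↦ −x` of a cube point. -/
def negc {d : ℕ} (x : Cube d) : Cube d := fun i => !(x i)

/-- The action of a permutation `σ` of the coordinates on a cube point: `σ(x)` is the
vector whose `σ(i)`-th coordinate is `x_i`. -/
def permc {d : ℕ} (σ : Equiv.Perm (Fin d)) (x : Cube d) : Cube d := fun j => x (σ.symm j)

/-- Vertex set of the gadget: a hypercube `Q_v` for each vertex `v` of `H`, plus the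
two special vertices `s = inr false` and `t = inr true`. -/
abbrev W (VH : Type*) (d : ℕ) := (VH × Cube d) ⊕ Bool

/-- Supply-edge capacities of the gadget, where `N = n·2^d`:  a star edge of capacity
`1/N` from `s` (and from `t`) to every cube node, and hypercube edges of capacity
`α/N` inside each cube `Q_v`. -/
noncomputable def gcap (VH : Type*) [Fintype VH] (d : ℕ) (α : ℝ) :
    W VH d → W VH d → ℝ := fun u v =>
  match u, v with
  | Sum.inl _, Sum.inr _ => 1 / ((Fintype.card VH : ℝ) * 2 ^ d)
  | Sum.inr _, Sum.inl _ => 1 / ((Fintype.card VH : ℝ) * 2 ^ d)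
  | Sum.inl (w, x), Sum.inl (w', y) =>
      if w = w' ∧ (Finset.univ.filter fun i => x i ≠ y i).card = 1
      then α / ((Fintype.card VH : ℝ) * 2 ^ d) else 0
  | Sum.inr _, Sum.inr _ => 0

/-- Capacity of a cut `(S, W∖S)` of the gadget: total capacity of the supply edges
crossing it (each crossing pair counted once). -/
noncomputable def cutCap (VH : Type*) [Fintype VH] (d : ℕ) (α : ℝ)
    (S : Finset (W VH d)) : ℝ :=
  ∑ u ∈ S, ∑ v ∈ Sᶜ, gcap VH d α u v

/-- Demand separated by a cut `(S, W∖S)` of the gadget, where `M = m·2^d` and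
`m = |E_H| = n·Δ(Δ−1)/2`:  for each edge `(v,w)` of `H` (given by a clique `k` and an
ordered pair of distinct vertices `v, w ∈ C k`, which counts each edge of the
multigraph `H` twice, whence the weight `1/(2M)`) and each `x ∈ {−1,1}^d`, there is a
demand of `1/M` between `x ∈ Q_v` and `−σ_{vw}(x) ∈ Q_w`. -/
noncomputable def cutDem {VH K : Type*} [Fintype VH] [Fintype K] (d Δ : ℕ)
    (C : K → Finset VH) (σ : K → VH → VH → Equiv.Perm (Fin d))
    (S : Finset (W VH d)) : ℝ :=
  ∑ k : K, ∑ v ∈ C k, ∑ w ∈ (C k).erase v, ∑ x : Cube d,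
    if ((Sum.inl (v, x) : W VH d) ∈ S ↔
        (Sum.inl (w, negc (permc (σ k v w) x)) : W VH d) ∈ S)
    then 0
    else 1 / (2 * ((Fintype.card K : ℝ) * ((Δ : ℝ) * ((Δ : ℝ) - 1) / 2) * 2 ^ d))

/-- Flipping one coordinate. -/
def flipc {d : ℕ} (i : Fin d) : Cube d ≃ Cube d where
  toFun x := Function.update x i (!(x i))
  invFun x := Function.update x i (!(x i))
  left_inv x := by simp
  right_inv x := by simp

lemma half_eq {d : ℕ} (i : Fin d) (c : ℝ) :
    (∑ x : Cube d, if x i = true then c else 0) = ∑ x : Cube d, if x i = false then c else 0 := by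
  rw [← Equiv.sum_comp (flipc i)]
  apply Finset.sum_congr rfl
  intro x _
  simp [flipc]

lemma half_add {d : ℕ} (i : Fin d) (c : ℝ) :
    (∑ x : Cube d, if x i = true then c else 0) + (∑ x : Cube d, if x i = false then c else 0)
      = 2 ^ d * c := by
  rw [← Finset.sum_add_distrib]
  have : ∀ x : Cube d, ((if x i = true then c else 0) + (if x i = false then c else 0)) = c := by
    intro x
    cases x i <;> simp
  simp [this]

lemma half_true {d : ℕ} (i : Fin d) (c : ℝ) :
    (∑ x : Cube d, if x i = true then c else 0) = 2 ^ d * c / 2 := by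
  linarith [half_eq i c, half_add i c]

lemma half_false {d : ℕ} (i : Fin d) (c : ℝ) :
    (∑ x : Cube d, if x i = false then c else 0) = 2 ^ d * c / 2 := by
  linarith [half_eq i c, half_add i c]

lemma nb_iff {d : ℕ} (i : Fin d) (x y : Cube d) (hx : x i = true) :
    (y i = false ∧ (Finset.univ.filter fun j => x j ≠ y j).card = 1) ↔
      y = Function.update x i false := by
  constructor
  · rintro ⟨hy, hc⟩
    obtain ⟨a, ha⟩ := Finset.card_eq_one.mp hc
    have hm : ∀ j, x j ≠ y j ↔ j = a := by
      intro j
      have := Finset.ext_iff.mp ha j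
      simpa using this
    have hia : i = a := (hm i).mp (by simp [hx, hy])
    subst hia
    funext j
    by_cases hj : j = i
    · subst hj; simp [hy]
    · have := (hm j).not.mpr hj
      simp only [ne_eq, not_not] at this
      simp [Function.update_of_ne hj, this]
  · rintro rfl
    refine ⟨by simp, ?_⟩
    rw [Finset.card_eq_one]
    refine ⟨i, ?_⟩
    ext j
    by_cases hj : j = i
    · subst hj; simp [hx]
    · simp [Function.update_of_ne hj, hj]

/-- Membership in the dictator cut. -/
def inCut {VH : Type*} {d : ℕ} (f : VH → Fin d) : W VH d → Prop
  | Sum.inl (v, x) => x (f v) = true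
  | Sum.inr b => b = false

lemma cutCap_eq {VH : Type*} [Fintype VH] (d : ℕ) (α : ℝ) (P : W VH d → Prop) :
    cutCap VH d α (Finset.univ.filter P) =
      ∑ u, ∑ v, if P u then (if P v then 0 else gcap VH d α u v) else 0 := by
  unfold cutCap
  rw [Finset.sum_filter]
  apply Finset.sum_congr rfl
  intro u _
  by_cases hu : P u
  · simp only [hu, if_true]
    rw [Finset.compl_filter, Finset.sum_filter]
    apply Finset.sum_congr rfl
    intro v _
    by_cases hv : P v <;> simp [hv]
  · simp [hu]

lemma inner_sum {VH : Type*} [Fintype VH] {d : ℕ} (f : VH → Fin d) (c : ℝ) (v : VH) (x : Cube d)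
    (hx : x (f v) = true) :
    (∑ w : VH, ∑ y : Cube d, if y (f w) = true then 0 else
      if v = w ∧ (Finset.univ.filter fun i => x i ≠ y i).card = 1 then c else 0) = c := by
  rw [Finset.sum_eq_single v]
  · rw [Finset.sum_eq_single (Function.update x (f v) false)]
    · have := (nb_iff (f v) x _ hx).mpr rfl
      rw [if_neg (by simp), if_pos ⟨rfl, this.2⟩]
    · intro y _ hy
      by_cases h : y (f v) = true
      · rw [if_pos h]
      · rw [if_neg h, if_neg]
        rintro ⟨_, h2⟩
        exact hy ((nb_iff (f v) x y hx).mp ⟨by simpa using h, h2⟩)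
    · simp
  · intro w _ hw
    apply Finset.sum_eq_zero
    intro y _
    simp [Ne.symm hw]
  · simp

lemma inCut_inl {VH : Type*} {d : ℕ} (f : VH → Fin d) (v : VH) (x : Cube d) :
    inCut f (Sum.inl (v, x)) ↔ x (f v) = true := Iff.rfl

lemma inCut_inr {VH : Type*} {d : ℕ} (f : VH → Fin d) (b : Bool) :
    inCut f (Sum.inr b) ↔ b = false := Iff.rfl

lemma cap_dict {VH : Type*} [Fintype VH] (d : ℕ) (hn : 0 < Fintype.card VH) (α : ℝ)
    (f : VH → Fin d) :
    cutCap VH d α (Finset.univ.filter (inCut f)) = 1 + α / 2 := by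
  have hn' : (Fintype.card VH : ℝ) ≠ 0 := by positivity
  rw [cutCap_eq, Fintype.sum_sum_type, Fintype.sum_bool, Fintype.sum_prod_type]
  have h1 : ∀ v : VH, ∀ x : Cube d,
      (∑ u : W VH d, if inCut f (Sum.inl (v, x)) then
        (if inCut f u then 0 else gcap VH d α (Sum.inl (v, x)) u) else 0) =
      if x (f v) = true then (α + 1) / ((Fintype.card VH : ℝ) * 2 ^ d) else 0 := by
    intro v x
    by_cases hx : x (f v) = true
    · rw [Fintype.sum_sum_type, Fintype.sum_bool, Fintype.sum_prod_type]
      simp only [inCut_inl, inCut_inr, gcap, hx, if_true]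
      rw [inner_sum f _ v x hx]
      simp
      ring
    · simp [inCut_inl, inCut_inr, hx]
  simp only [h1, half_true]
  have h2 : (∑ u : W VH d, if inCut f (Sum.inr false) then
        (if inCut f u then 0 else gcap VH d α (Sum.inr false) u) else 0) = 1 / 2 := by
    rw [Fintype.sum_sum_type, Fintype.sum_bool, Fintype.sum_prod_type]
    simp only [inCut_inl, inCut_inr, gcap, if_true]
    have : ∀ v : VH, (∑ x : Cube d, if x (f v) = true then (0:ℝ) else
        1 / ((Fintype.card VH : ℝ) * 2 ^ d)) = 2 ^ d * (1 / ((Fintype.card VH : ℝ) * 2 ^ d)) / 2 := by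
      intro v
      rw [← half_false (f v)]
      apply Finset.sum_congr rfl
      intro x _
      cases x (f v) <;> simp
    simp only [this]
    simp
    field_simp
  rw [h2]
  simp [inCut_inl, inCut_inr]
  field_simp
  ring

/-- If there exists a labeling `f : V_H → [d]` satisfying at least a
`(1−η)` fraction of the constraints of the `Δ`-nice Unique Label Cover instance (here
the satisfied constraints are counted over ordered pairs, out of the
`n·Δ(Δ−1) = 2m` ordered constraints), then the gadget `(G,D)` has an admissible
(`s`–`t`-separating) cut of capacity exactly `1 + α/2` that separates at least
`(1−η)` units of demand. -/
theorem stmt_14 {VH K : Type*} [Fintype VH] [DecidableEq VH] [Fintype K]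
    (d Δ : ℕ) (hd : 0 < d) (hΔ : 2 ≤ Δ) (hn : 0 < Fintype.card VH)
    (hK : Fintype.card K = Fintype.card VH)
    (C : K → Finset VH) (hCsize : ∀ k, (C k).card = Δ)
    (hCmem : ∀ v : VH, (Finset.univ.filter fun k => v ∈ C k).card = Δ)
    (σ : K → VH → VH → Equiv.Perm (Fin d))
    (hσ : ∀ k v w, σ k w v = (σ k v w)⁻¹)
    (α : ℝ) (hα : 0 < α) (η : ℝ)
    (f : VH → Fin d)
    (hsat : (1 - η) * ((Fintype.card K : ℝ) * ((Δ : ℝ) * ((Δ : ℝ) - 1))) ≤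
        ∑ k : K, ∑ v ∈ C k, ∑ w ∈ (C k).erase v,
          (if σ k v w (f v) = f w then (1 : ℝ) else 0)) :
    ∃ S : Finset (W VH d),
      ((Sum.inr false : W VH d) ∈ S ↔ (Sum.inr true : W VH d) ∉ S) ∧
      cutCap VH d α S = 1 + α / 2 ∧
      1 - η ≤ cutDem d Δ C σ S := by
  refine ⟨Finset.univ.filter (inCut f), by simp [inCut], cap_dict d hn α f, ?_⟩
  have hKpos : (0 : ℝ) < Fintype.card K := by rw [hK]; exact_mod_cast hn
  have hΔ' : (2 : ℝ) ≤ Δ := by exact_mod_cast hΔ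
  have hpos : 0 < (Fintype.card K : ℝ) * ((Δ : ℝ) * ((Δ : ℝ) - 1)) := by
    apply mul_pos hKpos
    apply mul_pos <;> linarith
  rw [← le_div_iff₀ hpos] at hsat
  refine hsat.trans ?_
  unfold cutDem
  simp only [Finset.sum_div]
  apply Finset.sum_le_sum
  intro k _
  apply Finset.sum_le_sum
  intro v _
  have hinst : ∀ g h : VH → ℝ, (∀ w, g w ≤ h w) →
      ∑ w ∈ (C k).erase v, g w ≤
        ∑ w ∈ @Finset.erase VH (fun a b => Classical.propDecidable (a = b)) (C k) v, h w := by
    intro g h hgh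
    refine (Finset.sum_le_sum (fun w _ => hgh w)).trans (le_of_eq ?_)
    apply Finset.sum_congr _ (fun _ _ => rfl)
    ext a
    simp only [Finset.mem_erase]
  apply hinst
  intro w
  have hw : 0 ≤ 1 / (2 * ((Fintype.card K : ℝ) * ((Δ : ℝ) * ((Δ : ℝ) - 1) / 2) * 2 ^ d)) := by
    have : 2 * ((Fintype.card K : ℝ) * ((Δ : ℝ) * ((Δ : ℝ) - 1) / 2) * 2 ^ d) =
      (Fintype.card K : ℝ) * ((Δ : ℝ) * ((Δ : ℝ) - 1)) * 2 ^ d := by ring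
    rw [this]
    positivity
  by_cases hs : σ k v w (f v) = f w
  · have hsy : (σ k v w).symm (f w) = f v := by rw [← hs]; simp
    have hne : ∀ x : Cube d, ¬ ((Sum.inl (v, x) : W VH d) ∈ Finset.univ.filter (inCut f) ↔
        (Sum.inl (w, negc (permc (σ k v w) x)) : W VH d) ∈ Finset.univ.filter (inCut f)) := by
      intro x
      simp [inCut, negc, permc, hsy]
    simp only [hne, if_false, hs, if_true]
    have h1 : (Δ : ℝ) - 1 ≠ 0 := by linarith
    have h0 : (Δ : ℝ) ≠ 0 := by linarith
    simp
    apply le_of_eq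
    field_simp
  · rw [if_neg hs, zero_div]
    apply Finset.sum_nonneg
    intro x _
    split_ifs
    · exact le_rfl
    · exact hw

end Stmt14
end

section
/- Fix ε > 0 and let α = ε² in the gadget. Call a vertex v ∈ V_H bad for a cut (A,Ā) if more than (32/(αε))·2^{d−1} hypercube edges of Q_v cross the cut. Then any cut (A,Ā) of the gadget whose sparsity is at most 2 has at most (ε/8)·n bad vertices. -/
attribute [local instance] Classical.propDecidable

open Finset

namespace Stmt15

/-- The hypercube `{−1,1}^d`, encoded as `Fin d → Bool`. -/
abbrev Cube (d : ℕ) := Fin d → Bool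

/-- Coordinatewise negation `x ↦ −x` of a cube point. -/
def negc {d : ℕ} (x : Cube d) : Cube d := fun i => !(x i)

/-- The action of a permutation `σ` of the coordinates on a cube point: `σ(x)` is the
vector whose `σ(i)`-th coordinate is `x_i`. -/
def permc {d : ℕ} (σ : Equiv.Perm (Fin d)) (x : Cube d) : Cube d := fun j => x (σ.symm j)

/-- Vertex set of the gadget: a hypercube `Q_v` for each vertex `v` of `H`, plus the
two special vertices `s = inr false` and `t = inr true`. -/
abbrev W (VH : Type*) (d : ℕ) := (VH × Cube d) ⊕ Bool

/-- Supply-edge capacities of the gadget, where `N = n·2^d`:  a star edge of capacity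
`1/N` from `s` (and from `t`) to every cube node, and hypercube edges of capacity
`α/N` inside each cube `Q_v`. -/
noncomputable def gcap (VH : Type*) [Fintype VH] (d : ℕ) (α : ℝ) :
    W VH d → W VH d → ℝ := fun u v =>
  match u, v with
  | Sum.inl _, Sum.inr _ => 1 / ((Fintype.card VH : ℝ) * 2 ^ d)
  | Sum.inr _, Sum.inl _ => 1 / ((Fintype.card VH : ℝ) * 2 ^ d)
  | Sum.inl (w, x), Sum.inl (w', y) =>
      if w = w' ∧ (Finset.univ.filter fun i => x i ≠ y i).card = 1
      then α / ((Fintype.card VH : ℝ) * 2 ^ d) else 0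
  | Sum.inr _, Sum.inr _ => 0

/-- Capacity of a cut `(S, W∖S)` of the gadget: total capacity of the supply edges
crossing it (each crossing pair counted once). -/
noncomputable def cutCap (VH : Type*) [Fintype VH] (d : ℕ) (α : ℝ)
    (S : Finset (W VH d)) : ℝ :=
  ∑ u ∈ S, ∑ v ∈ Sᶜ, gcap VH d α u v

/-- Demand separated by a cut `(S, W∖S)` of the gadget, where `M = m·2^d` and
`m = |E_H| = n·Δ(Δ−1)/2`:  for each edge `(v,w)` of `H` (given by a clique `k` and an
ordered pair of distinct vertices `v, w ∈ C k`, which counts each edge of the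
multigraph `H` twice, whence the weight `1/(2M)`) and each `x ∈ {−1,1}^d`, there is a
demand of `1/M` between `x ∈ Q_v` and `−σ_{vw}(x) ∈ Q_w`. -/
noncomputable def cutDem {VH K : Type*} [Fintype VH] [Fintype K] (d Δ : ℕ)
    (C : K → Finset VH) (σ : K → VH → VH → Equiv.Perm (Fin d))
    (S : Finset (W VH d)) : ℝ :=
  ∑ k : K, ∑ v ∈ C k, ∑ w ∈ (C k).erase v, ∑ x : Cube d,
    if ((Sum.inl (v, x) : W VH d) ∈ S ↔
        (Sum.inl (w, negc (permc (σ k v w) x)) : W VH d) ∈ S)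
    then 0
    else 1 / (2 * ((Fintype.card K : ℝ) * ((Δ : ℝ) * ((Δ : ℝ) - 1) / 2) * 2 ^ d))


/-- Number of hypercube edges of the cube `Q_v` crossing the cut `(A, W∖A)`. -/
noncomputable def cubeCut {VH : Type*} [Fintype VH] (d : ℕ) (v : VH)
    (A : Finset (W VH d)) : ℕ :=
  ∑ x : Cube d, ∑ y : Cube d,
    if (Sum.inl (v, x) : W VH d) ∈ A ∧ (Sum.inl (v, y) : W VH d) ∉ A ∧
       (Finset.univ.filter fun i => x i ≠ y i).card = 1
    then 1 else 0

/-- Capacities are nonnegative. -/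
theorem gcap_nonneg {VH : Type*} [Fintype VH] (d : ℕ) (α : ℝ) (hα : 0 ≤ α) (u v : W VH d) :
    0 ≤ gcap VH d α u v := by
  rcases u with ⟨w, x⟩ | b <;> rcases v with ⟨w', y⟩ | b' <;> simp only [gcap]
  · split_ifs <;> positivity
  · positivity
  · positivity
  · exact le_rfl

/-- The hypercube edges contribute `α/N` each to the cut capacity. -/
theorem cutCap_ge {VH : Type*} [Fintype VH] (d : ℕ) (α : ℝ) (hα : 0 ≤ α)
    (A : Finset (W VH d)) :
    α / ((Fintype.card VH : ℝ) * 2 ^ d) * ∑ v : VH, (cubeCut d v A : ℝ) ≤ cutCap VH d α A := by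
  have h1 : cutCap VH d α A = ∑ u : W VH d, ∑ v : W VH d,
      if u ∈ A ∧ v ∉ A then gcap VH d α u v else 0 := by
    unfold cutCap
    rw [← Finset.sum_subset (Finset.subset_univ A)]
    · refine Finset.sum_congr rfl fun u hu => ?_
      rw [← Finset.sum_subset (Finset.subset_univ Aᶜ)]
      · refine Finset.sum_congr rfl fun v hv => ?_
        rw [if_pos ⟨hu, Finset.mem_compl.mp hv⟩]
      · intro v _ hv
        rw [if_neg (fun h => hv (Finset.mem_compl.mpr h.2))]
    · intro u _ hu
      exact Finset.sum_eq_zero fun v _ => if_neg (fun h => hu h.1)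
  have hnn : ∀ u v : W VH d, 0 ≤ (if u ∈ A ∧ v ∉ A then gcap VH d α u v else 0) := by
    intro u v
    split_ifs
    · exact gcap_nonneg d α hα u v
    · exact le_rfl
  rw [h1, Fintype.sum_sum_type]
  refine le_trans ?_ (le_add_of_nonneg_right
    (Finset.sum_nonneg fun u _ => Finset.sum_nonneg fun v _ => hnn _ _))
  rw [Fintype.sum_prod_type, Finset.mul_sum]
  refine Finset.sum_le_sum fun v _ => ?_
  unfold cubeCut
  push_cast
  rw [Finset.mul_sum]
  refine Finset.sum_le_sum fun x _ => ?_
  rw [Fintype.sum_sum_type]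
  refine le_trans ?_ (le_add_of_nonneg_right (Finset.sum_nonneg fun u _ => hnn _ _))
  rw [Fintype.sum_prod_type]
  refine le_trans ?_ (Finset.single_le_sum (f := fun w : VH => ∑ y : Cube d,
    if (Sum.inl (v, x) : W VH d) ∈ A ∧ (Sum.inl (w, y) : W VH d) ∉ A then
      gcap VH d α (Sum.inl (v, x)) (Sum.inl (w, y)) else 0)
    (fun w _ => Finset.sum_nonneg fun y _ => hnn _ _) (Finset.mem_univ v))
  rw [Finset.mul_sum]
  refine Finset.sum_le_sum fun y _ => ?_
  by_cases hx : (Sum.inl (v, x) : W VH d) ∈ A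
  · by_cases hy : (Sum.inl (v, y) : W VH d) ∈ A
    · simp [hx, hy]
    · by_cases hc : (Finset.univ.filter fun i => x i ≠ y i).card = 1
      · rw [if_pos ⟨hx, hy, hc⟩, if_pos ⟨hx, hy⟩]
        simp only [gcap]
        rw [if_pos ⟨trivial, hc⟩, mul_one]
      · rw [if_neg (fun h => hc h.2.2), mul_zero]
        exact hnn _ _
  · simp [hx]

/-- The total demand is one, so a cut separates at most one unit of demand. -/
theorem cutDem_le_one {VH K : Type*} [Fintype VH] [Fintype K] (d Δ : ℕ) (hΔ : 2 ≤ Δ)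
    (hK : 0 < Fintype.card K)
    (C : K → Finset VH) (hCsize : ∀ k, (C k).card = Δ)
    (σ : K → VH → VH → Equiv.Perm (Fin d)) (A : Finset (W VH d)) :
    cutDem d Δ C σ A ≤ 1 := by
  have hΔ' : (2 : ℝ) ≤ Δ := by exact_mod_cast hΔ
  have hK' : (0 : ℝ) < Fintype.card K := by exact_mod_cast hK
  have hΔ1 : (0 : ℝ) < (Δ : ℝ) - 1 := by linarith
  have hΔ0 : (0 : ℝ) < (Δ : ℝ) := by linarith
  set c : ℝ := 1 / (2 * ((Fintype.card K : ℝ) * ((Δ : ℝ) * ((Δ : ℝ) - 1) / 2) * 2 ^ d)) with hc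
  have hc0 : 0 ≤ c := by positivity
  have h : cutDem d Δ C σ A ≤
      ∑ k : K, ∑ v ∈ C k, ∑ w ∈ (C k).erase v, ∑ x : Cube d, c := by
    unfold cutDem
    refine Finset.sum_le_sum fun k _ => Finset.sum_le_sum fun v _ =>
      Finset.sum_le_sum fun w _ => Finset.sum_le_sum fun x _ => ?_
    split_ifs
    · exact hc0
    · exact le_rfl
  refine h.trans (le_of_eq ?_)
  have h2 : ∀ k : K, ∑ v ∈ C k, ∑ w ∈ (C k).erase v, ∑ x : Cube d, c
      = (Δ : ℝ) * (((Δ : ℝ) - 1) * (2 ^ d * c)) := by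
    intro k
    have h3 : ∀ v ∈ C k, ∑ w ∈ (C k).erase v, ∑ x : Cube d, c
        = ((Δ : ℝ) - 1) * (2 ^ d * c) := by
      intro v hv
      rw [Finset.sum_const, Finset.sum_const, Finset.card_erase_of_mem hv, hCsize k,
        nsmul_eq_mul, nsmul_eq_mul, Nat.cast_sub (by omega)]
      simp
    rw [Finset.sum_congr rfl h3, Finset.sum_const, hCsize k, nsmul_eq_mul]
  rw [Finset.sum_congr rfl (fun k _ => h2 k), Finset.sum_const, Finset.card_univ, nsmul_eq_mul, hc]
  field_simp

/-- Fix `ε > 0` and let `α = ε²` in the gadget.  Call a vertex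
`v ∈ V_H` bad for a cut `(A, Ā)` if more than `(32/(αε))·2^{d−1}` hypercube edges of
`Q_v` cross the cut.  Then any cut `(A, Ā)` of the gadget whose sparsity is (defined
and) at most `2` has at most `(ε/8)·n` bad vertices. -/
theorem stmt_15 {VH K : Type*} [Fintype VH] [DecidableEq VH] [Fintype K]
    (d Δ : ℕ) (hd : 0 < d) (hΔ : 2 ≤ Δ) (hn : 0 < Fintype.card VH)
    (hK : Fintype.card K = Fintype.card VH)
    (C : K → Finset VH) (hCsize : ∀ k, (C k).card = Δ)
    (hCmem : ∀ v : VH, (Finset.univ.filter fun k => v ∈ C k).card = Δ)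
    (σ : K → VH → VH → Equiv.Perm (Fin d))
    (hσ : ∀ k v w, σ k w v = (σ k v w)⁻¹)
    (ε α : ℝ) (hε : 0 < ε) (hαdef : α = ε ^ 2)
    (A : Finset (W VH d))
    (hdem : 0 < cutDem d Δ C σ A)
    (hsp : cutCap VH d α A / cutDem d Δ C σ A ≤ 2) :
    ((Finset.univ.filter fun v : VH =>
        (32 / (α * ε)) * (2 : ℝ) ^ (d - 1) < (cubeCut d v A : ℝ)).card : ℝ)
      ≤ ε / 8 * (Fintype.card VH : ℝ) := by
  have hα : 0 < α := by rw [hαdef]; positivity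
  have hn' : (0 : ℝ) < Fintype.card VH := by exact_mod_cast hn
  have hD := cutDem_le_one d Δ hΔ (hK ▸ hn) C hCsize σ A
  have hcap : cutCap VH d α A ≤ 2 := by
    rw [div_le_iff₀ hdem] at hsp
    linarith
  have hge := (cutCap_ge d α hα.le A).trans hcap
  set B := Finset.univ.filter fun v : VH =>
        (32 / (α * ε)) * (2 : ℝ) ^ (d - 1) < (cubeCut d v A : ℝ) with hB
  have hsum : (B.card : ℝ) * ((32 / (α * ε)) * (2 : ℝ) ^ (d - 1))
      ≤ ∑ v : VH, (cubeCut d v A : ℝ) := by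
    rw [← nsmul_eq_mul]
    refine (Finset.card_nsmul_le_sum B (fun v => (cubeCut d v A : ℝ)) _ ?_).trans
      (Finset.sum_le_sum_of_subset_of_nonneg (Finset.subset_univ B) ?_)
    · intro v hv
      exact (Finset.mem_filter.mp hv).2.le
    · intro v _ _
      positivity
  have hpow : (2 : ℝ) ^ d = 2 * 2 ^ (d - 1) := by
    rw [← pow_succ']
    congr 1
    omega
  have h3 := (mul_le_mul_of_nonneg_left hsum
    (by positivity : 0 ≤ α / ((Fintype.card VH : ℝ) * 2 ^ d))).trans hge
  have h4 : α / ((Fintype.card VH : ℝ) * 2 ^ d) *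
      ((B.card : ℝ) * ((32 / (α * ε)) * (2 : ℝ) ^ (d - 1)))
      = 16 * B.card / (Fintype.card VH * ε) := by
    rw [hpow]
    field_simp
    ring
  rw [h4, div_le_iff₀ (by positivity)] at h3
  linarith

end Stmt15
end

section
/- In the gadget (G,D), every inadmissible cut (A,Ā) — i.e., every cut that does not separate s from t — satisfies dem(A,Ā) ≤ cap(A,Ā): the total demand it separates is at most the total capacity it cuts. -/
attribute [local instance] Classical.propDecidable

open Finset

namespace Stmt16

/-- The hypercube `{−1,1}^d`, encoded as `Fin d → Bool`. -/
abbrev Cube (d : ℕ) := Fin d → Bool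

/-- Coordinatewise negation `x ↦ −x` of a cube point. -/
def negc {d : ℕ} (x : Cube d) : Cube d := fun i => !(x i)

/-- The action of a permutation `σ` of the coordinates on a cube point: `σ(x)` is the
vector whose `σ(i)`-th coordinate is `x_i`. -/
def permc {d : ℕ} (σ : Equiv.Perm (Fin d)) (x : Cube d) : Cube d := fun j => x (σ.symm j)

/-- Vertex set of the gadget: a hypercube `Q_v` for each vertex `v` of `H`, plus the
two special vertices `s = inr false` and `t = inr true`. -/
abbrev W (VH : Type*) (d : ℕ) := (VH × Cube d) ⊕ Bool

/-- Supply-edge capacities of the gadget, where `N = n·2^d`:  a star edge of capacity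
`1/N` from `s` (and from `t`) to every cube node, and hypercube edges of capacity
`α/N` inside each cube `Q_v`. -/
noncomputable def gcap (VH : Type*) [Fintype VH] (d : ℕ) (α : ℝ) :
    W VH d → W VH d → ℝ := fun u v =>
  match u, v with
  | Sum.inl _, Sum.inr _ => 1 / ((Fintype.card VH : ℝ) * 2 ^ d)
  | Sum.inr _, Sum.inl _ => 1 / ((Fintype.card VH : ℝ) * 2 ^ d)
  | Sum.inl (w, x), Sum.inl (w', y) =>
      if w = w' ∧ (Finset.univ.filter fun i => x i ≠ y i).card = 1
      then α / ((Fintype.card VH : ℝ) * 2 ^ d) else 0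
  | Sum.inr _, Sum.inr _ => 0

/-- Capacity of a cut `(S, W∖S)` of the gadget: total capacity of the supply edges
crossing it (each crossing pair counted once). -/
noncomputable def cutCap (VH : Type*) [Fintype VH] (d : ℕ) (α : ℝ)
    (S : Finset (W VH d)) : ℝ :=
  ∑ u ∈ S, ∑ v ∈ Sᶜ, gcap VH d α u v

/-- Demand separated by a cut `(S, W∖S)` of the gadget, where `M = m·2^d` and
`m = |E_H| = n·Δ(Δ−1)/2`:  for each edge `(v,w)` of `H` (given by a clique `k` and an
ordered pair of distinct vertices `v, w ∈ C k`, which counts each edge of the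
multigraph `H` twice, whence the weight `1/(2M)`) and each `x ∈ {−1,1}^d`, there is a
demand of `1/M` between `x ∈ Q_v` and `−σ_{vw}(x) ∈ Q_w`. -/
noncomputable def cutDem {VH K : Type*} [Fintype VH] [Fintype K] (d Δ : ℕ)
    (C : K → Finset VH) (σ : K → VH → VH → Equiv.Perm (Fin d))
    (S : Finset (W VH d)) : ℝ :=
  ∑ k : K, ∑ v ∈ C k, ∑ w ∈ (C k).erase v, ∑ x : Cube d,
    if ((Sum.inl (v, x) : W VH d) ∈ S ↔
        (Sum.inl (w, negc (permc (σ k v w) x)) : W VH d) ∈ S)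
    then 0
    else 1 / (2 * ((Fintype.card K : ℝ) * ((Δ : ℝ) * ((Δ : ℝ) - 1) / 2) * 2 ^ d))


lemma cap_lower {VH : Type*} [Fintype VH] (d : ℕ) (α : ℝ) (hα : 0 < α)
    (A : Finset (W VH d))
    (hinadm : ((Sum.inr false : W VH d) ∈ A ↔ (Sum.inr true : W VH d) ∈ A)) :
    (2 / ((Fintype.card VH : ℝ) * 2 ^ d)) * ∑ p : VH × Cube d,
      (if ((Sum.inl p : W VH d) ∈ A ↔ (Sum.inr false : W VH d) ∈ A) then (0:ℝ) else 1)
      ≤ cutCap VH d α A := by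
  have hg : ∀ u v, 0 ≤ gcap VH d α u v := by
    intro u v
    rcases u with ⟨w, x⟩ | b <;> rcases v with ⟨w', y⟩ | b' <;> simp only [gcap] <;>
      positivity
  have e : cutCap VH d α A = ∑ u, ∑ v, if u ∈ A ∧ v ∉ A then gcap VH d α u v else 0 := by
    unfold cutCap
    have e0 : ∀ (T : Finset (W VH d)) (f : W VH d → ℝ),
        ∑ u ∈ T, f u = ∑ u, if u ∈ T then f u else 0 := by
      intro T f
      rw [← Finset.sum_filter]
      congr 1
      ext v
      simp
    rw [e0]
    refine Finset.sum_congr rfl fun u _ => ?_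
    by_cases hu : u ∈ A
    · simp only [hu, if_true, true_and]
      rw [e0]
      refine Finset.sum_congr rfl fun v _ => ?_
      by_cases hv : v ∈ A <;> simp [hv]
    · simp [hu]
  rw [e, Fintype.sum_sum_type]
  simp only [Fintype.sum_sum_type, Fintype.sum_bool, Finset.sum_add_distrib]
  have h1 : 0 ≤ ∑ p : VH × Cube d, ∑ q : VH × Cube d,
      if (Sum.inl p : W VH d) ∈ A ∧ (Sum.inl q : W VH d) ∉ A then
        gcap VH d α (Sum.inl p) (Sum.inl q) else 0 :=
    Finset.sum_nonneg fun p _ => Finset.sum_nonneg fun q _ => by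
      split_ifs
      · exact hg _ _
      · exact le_rfl
  have h2 : (2 / ((Fintype.card VH : ℝ) * 2 ^ d)) * ∑ p : VH × Cube d,
      (if ((Sum.inl p : W VH d) ∈ A ↔ (Sum.inr false : W VH d) ∈ A) then (0:ℝ) else 1)
      = ∑ p : VH × Cube d, ((if (Sum.inl p : W VH d) ∈ A ∧ (Sum.inr true : W VH d) ∉ A then
        gcap VH d α (Sum.inl p) (Sum.inr true) else 0) +
        (if (Sum.inl p : W VH d) ∈ A ∧ (Sum.inr false : W VH d) ∉ A then
        gcap VH d α (Sum.inl p) (Sum.inr false) else 0) +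
        (if (Sum.inr true : W VH d) ∈ A ∧ (Sum.inl p : W VH d) ∉ A then
        gcap VH d α (Sum.inr true) (Sum.inl p) else 0) +
        (if (Sum.inr false : W VH d) ∈ A ∧ (Sum.inl p : W VH d) ∉ A then
        gcap VH d α (Sum.inr false) (Sum.inl p) else 0)) := by
    rw [Finset.mul_sum]
    refine Finset.sum_congr rfl fun p _ => ?_
    by_cases hp : (Sum.inl p : W VH d) ∈ A <;>
    by_cases hs : (Sum.inr false : W VH d) ∈ A <;>
    have ht := hs <;> rw [hinadm] at ht <;> simp [hp, hs, ht, gcap] <;> ring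
  rw [h2]
  simp only [Finset.sum_add_distrib]
  have h3 : ∀ a b : Bool, 0 ≤ (if (Sum.inr a : W VH d) ∈ A ∧ (Sum.inr b : W VH d) ∉ A then
        gcap VH d α (Sum.inr a) (Sum.inr b) else 0) := fun a b => by
      split_ifs
      · exact hg _ _
      · exact le_rfl
  have := h3 true true
  have := h3 true false
  have := h3 false true
  have := h3 false false
  linarith

lemma negperm_bij {d : ℕ} (τ : Equiv.Perm (Fin d)) :
    Function.Bijective (fun x : Cube d => negc (permc τ x)) := by
  rw [← Finite.injective_iff_bijective]
  intro x y h
  funext i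
  have := congrFun h (τ i)
  simpa [negc, permc] using this

/-- In the gadget `(G,D)`, every inadmissible cut `(A, Ā)` — i.e.,
every cut that does not separate `s` from `t` — satisfies `dem(A,Ā) ≤ cap(A,Ā)`:
the total demand it separates is at most the total capacity it cuts. -/
theorem stmt_16 {VH K : Type*} [Fintype VH] [DecidableEq VH] [Fintype K]
    (d Δ : ℕ) (hd : 0 < d) (hΔ : 2 ≤ Δ) (hn : 0 < Fintype.card VH)
    (hK : Fintype.card K = Fintype.card VH)
    (C : K → Finset VH) (hCsize : ∀ k, (C k).card = Δ)
    (hCmem : ∀ v : VH, (Finset.univ.filter fun k => v ∈ C k).card = Δ)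
    (σ : K → VH → VH → Equiv.Perm (Fin d))
    (hσ : ∀ k v w, σ k w v = (σ k v w)⁻¹)
    (α : ℝ) (hα : 0 < α)
    (A : Finset (W VH d))
    (hinadm : ((Sum.inr false : W VH d) ∈ A ↔ (Sum.inr true : W VH d) ∈ A)) :
    cutDem d Δ C σ A ≤ cutCap VH d α A := by
  refine le_trans ?_ (cap_lower d α hα A hinadm)
  set b : VH × Cube d → ℝ := fun p =>
    (if ((Sum.inl p : W VH d) ∈ A ↔ (Sum.inr false : W VH d) ∈ A) then (0:ℝ) else 1) with hb
  set c : ℝ := 1 / (2 * ((Fintype.card K : ℝ) * ((Δ : ℝ) * ((Δ : ℝ) - 1) / 2) * 2 ^ d)) with hc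
  have hΔ' : (2:ℝ) ≤ Δ := by exact_mod_cast hΔ
  have hn' : (0:ℝ) < Fintype.card VH := by exact_mod_cast hn
  have hc0 : 0 ≤ c := by
    have : (0:ℝ) ≤ (Δ:ℝ) - 1 := by linarith
    positivity
  let B : VH → ℝ := fun v => ∑ x : Cube d, b (v, x)
  have hstep : cutDem d Δ C σ A ≤ ∑ k : K, ∑ v ∈ C k, ∑ w ∈ (C k).erase v, c * (B v + B w) := by
    unfold cutDem
    refine Finset.sum_le_sum fun k _ => Finset.sum_le_sum fun v _ => ?_
    refine le_trans (Finset.sum_le_sum (g := fun w => c * (B v + B w)) fun w _ => ?_) (le_of_eq ?_)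
    · have hB : B w = ∑ x : Cube d, b (w, negc (permc (σ k v w) x)) :=
        ((negperm_bij (σ k v w)).sum_comp (fun y => b (w, y))).symm
      rw [hB, ← Finset.sum_add_distrib, Finset.mul_sum]
      refine Finset.sum_le_sum fun x _ => ?_
      simp only [hb]
      rw [← hc]
      by_cases h1 : (Sum.inl (v, x) : W VH d) ∈ A <;>
      by_cases h2 : (Sum.inl (w, negc (permc (σ k v w) x)) : W VH d) ∈ A <;>
      by_cases h3 : (Sum.inr false : W VH d) ∈ A <;> simp [h1, h2, h3] <;> linarith
    · congr!
  refine hstep.trans (le_of_eq ?_)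
  have hk : ∀ k : K, ∑ v ∈ C k, ∑ w ∈ (C k).erase v, c * (B v + B w)
      = c * (2 * ((Δ:ℝ) - 1)) * ∑ v ∈ C k, B v := by
    intro k
    have : ∀ v ∈ C k, ∑ w ∈ (C k).erase v, c * (B v + B w)
        = c * (((Δ:ℝ) - 2) * B v + ∑ w ∈ C k, B w) := by
      intro v hv
      have h := Finset.add_sum_erase (C k) (fun w => c * (B v + B w)) hv
      have h' : ∑ w ∈ C k, c * (B v + B w) = c * (Δ * B v + ∑ w ∈ C k, B w) := by
        rw [← Finset.mul_sum, Finset.sum_add_distrib, Finset.sum_const, hCsize, nsmul_eq_mul]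
      rw [h'] at h
      linear_combination h
    rw [Finset.sum_congr rfl this, ← Finset.mul_sum, Finset.sum_add_distrib, ← Finset.mul_sum,
      Finset.sum_const, hCsize, nsmul_eq_mul]
    ring
  rw [Finset.sum_congr rfl fun k _ => hk k, ← Finset.mul_sum]
  have hs : ∑ k : K, ∑ v ∈ C k, B v = Δ * ∑ p, b p := by
    have e1 : ∀ k : K, ∑ v ∈ C k, B v = ∑ v, if v ∈ C k then B v else 0 := by
      intro k
      rw [← Finset.sum_filter]
      congr 1
      ext v
      simp
    rw [Finset.sum_congr rfl fun k _ => e1 k, Finset.sum_comm, Fintype.sum_prod_type,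
      Finset.mul_sum]
    refine Finset.sum_congr rfl fun v _ => ?_
    rw [← Finset.sum_filter, Finset.sum_const, nsmul_eq_mul]
    congr 2
    rw [← hCmem v]
  rw [hs, hc, hK]
  have : (Δ:ℝ) - 1 ≠ 0 := by linarith
  have : (Δ:ℝ) ≠ 0 := by linarith
  field_simp
  simp only [hb]
  congr!

end Stmt16
end

section
/- Let H be a multigraph that is an edge-disjoint union of cliques, each on exactly Δ ≥ 2 vertices. For every ℓ ≥ 1, every cut of the multigraph H × I_ℓ contains at most a (1/2 + 1/(2(Δ−1))) fraction of its edges. -/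
open Finset

/-- Let `H` be a multigraph that is an edge-disjoint union of cliques
(indexed by `K`), each on exactly `Δ ≥ 2` vertices.  For every `ℓ ≥ 1`, every cut
(two-coloring `g`) of the multigraph `H × I_ℓ` contains at most a
`(1/2 + 1/(2(Δ−1)))` fraction of its edges.  (Edges are counted here as ordered
quadruples `(k, v, w, i, j)`, which counts every edge of `H × I_ℓ` exactly twice, so
the fractions are unaffected.) -/
theorem stmt_17 {V K : Type*} [Fintype V] [DecidableEq V] [Fintype K]
    (Δ : ℕ) (hΔ : 2 ≤ Δ) (C : K → Finset V) (hC : ∀ k, (C k).card = Δ)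
    (ℓ : ℕ) (hℓ : 1 ≤ ℓ) (g : V × Fin ℓ → Bool) :
    (∑ k : K, ∑ v ∈ C k, ∑ w ∈ (C k).erase v, ∑ i : Fin ℓ, ∑ j : Fin ℓ,
        (if g (v, i) ≠ g (w, j) then (1 : ℝ) else 0))
      ≤ (1 / 2 + 1 / (2 * ((Δ : ℝ) - 1))) *
        (∑ k : K, ∑ v ∈ C k, ∑ w ∈ (C k).erase v, ∑ _i : Fin ℓ, ∑ _j : Fin ℓ, (1 : ℝ)) := by
  rw [Finset.mul_sum]
  refine Finset.sum_le_sum fun k _ => ?_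
  have hD : (2 : ℝ) ≤ (Δ : ℝ) := by exact_mod_cast hΔ
  have hR : (∑ v ∈ C k, ∑ w ∈ (C k).erase v, ∑ _i : Fin ℓ, ∑ _j : Fin ℓ, (1 : ℝ))
      = (Δ : ℝ) * (((Δ : ℝ) - 1) * ((ℓ : ℝ) * ℓ)) := by
    have h1 : ∀ v ∈ C k, (∑ w ∈ (C k).erase v, ∑ _i : Fin ℓ, ∑ _j : Fin ℓ, (1 : ℝ))
        = ((Δ : ℝ) - 1) * ((ℓ : ℝ) * ℓ) := by
      intro v hv
      have h2 : (((C k).erase v).card : ℝ) = (Δ : ℝ) - 1 := by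
        rw [Finset.card_erase_of_mem hv, hC k, Nat.cast_sub (by omega)]
        simp
      simp only [Finset.sum_const, Finset.card_univ, Fintype.card_fin, nsmul_eq_mul, mul_one, h2]
    rw [Finset.sum_congr rfl h1, Finset.sum_const, hC k, nsmul_eq_mul]
  rw [hR]
  have hR2 : (1 / 2 + 1 / (2 * ((Δ : ℝ) - 1))) * ((Δ : ℝ) * (((Δ : ℝ) - 1) * ((ℓ : ℝ) * ℓ)))
      = (Δ : ℝ) * Δ * (ℓ * ℓ) / 2 := by
    have : (Δ : ℝ) - 1 ≠ 0 := by linarith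
    field_simp
    ring
  rw [hR2]
  let s : V × Fin ℓ → ℝ := fun x => if g x then 1 else -1
  have hs : ∀ x y, (if g x ≠ g y then (1 : ℝ) else 0) = 1 / 2 - s x * s y / 2 := by
    intro x y
    simp only [s]
    cases g x <;> cases g y <;> norm_num
  calc _ ≤ ∑ v ∈ C k, ∑ w ∈ C k, ∑ i : Fin ℓ, ∑ j : Fin ℓ,
        (if g (v, i) ≠ g (w, j) then (1 : ℝ) else 0) := by
        refine Finset.sum_le_sum fun v _ => ?_
        refine Finset.sum_le_sum_of_subset_of_nonneg (Finset.erase_subset _ _) ?_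
        intro w _ _
        refine Finset.sum_nonneg fun i _ => Finset.sum_nonneg fun j _ => ?_
        split_ifs <;> norm_num
    _ = (Δ : ℝ) * Δ * (ℓ * ℓ) / 2 - (∑ v ∈ C k, ∑ i : Fin ℓ, s (v, i)) ^ 2 / 2 := by
        simp only [hs, Finset.sum_sub_distrib, ← Finset.sum_div, ← Finset.mul_sum,
          ← Finset.sum_mul, Finset.sum_const, Finset.card_univ, Fintype.card_fin, hC k,
          nsmul_eq_mul]
        ring
    _ ≤ _ := by
        have := sq_nonneg (∑ v ∈ C k, ∑ i : Fin ℓ, s (v, i))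
        linarith
end
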